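/- arXiv:1703.07147 — 3 statements merged into one kernel-verified Lean document; each statement's English description precedes it below -/
import Mathlib

section
/- Let T₁, T₂ be ℂ-linear triangulated categories of finite type with split-generators G₁, G₂ respectively, and F_i a triangulated endofunctor of T_i with F_iⁿG_i ≇ 0 for all n ≥ 0 (i = 1, 2). If there exists a fully faithful triangulated functor F': T₂ → T₁ admitting both a left and a right adjoint such that F'F₂ ≅ F₁F', then h_t(F₂) ≤ h_t(F₁) for all t ∈ ℝ. -/
/-!
Let `R` be a right adjoint of `F'`; it is triangulated, and `R F' ≅ id` because `F'` is fully
faithful. If `F₁ᵐ G₁` is built from `G₁` at cost `c`, and `F' G₂` is built from `G₁` at cost `a`,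
then `F₁ᵐ F' G₂ ≅ F' F₂ᵐ G₂` is built from `F₁ᵐ G₁` at cost `a`, hence from `G₁` at cost `a c`.
Applying `R`, with `b` the cost of building `R G₁` from `G₂`, the object `F₂ᵐ G₂` is built from `G₂`
at cost `a b c`. So `δ(G₂, F₂ᵐ G₂) ≤ K δ(G₁, F₁ᵐ G₁)` with `K` independent of `m`, and the bounded
factor disappears in the exponential growth rate (`limsup_log_le`).

The multiplicativity of costs (`Cost.comp`) rests on their subadditivity along triangles
(`Cost.add`), for which one usually invokes the octahedral axiom. The categories here are only
pretriangulated, and the axiom is replaced by `nonempty_retract_cone`: given `N₁ ⟶ N ⟶ M` and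
`f : N ⟶ A`, the cone `Z` of `f` is a retract of the cone `W` of an induced map from `M` to the cone
of `N₁ ⟶ N ⟶ A`. Counting ranks in long exact sequences shows that `Hom(Z, T)` and `Hom(W, T)`
have the same dimension for all `T`, and in a category of finite type this makes `Z` a retract
of `W` (`nonempty_retract_of_finrank_eq`). For the latter, `postRank_eq` shows that
`Hom(Z, -)` and `Hom(W, -)` see every morphism with the same rank, since consecutive morphisms in a
triangle determine each other's rank and `Hom` spaces vanish after large shifts. Therefore the
cone of the universal map `Wʰ ⟶ Z` kills the identity of `Z`, so the identity of `Z` factors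
through `Wʰ`; a trace argument and Fitting's lemma extract a common nonzero summand of
`Z` and `W`, and one continues with the complements.
-/

open CategoryTheory Limits Pretriangulated Filter
open scoped ENNReal

universe u v u₂ v₂

namespace CatEntropy

section Defs

variable (C : Type u) [Category.{v} C] [Preadditive C] [HasZeroObject C]
  [HasShift C ℤ] [∀ n : ℤ, (shiftFunctor C n).Additive] [Pretriangulated C]

/-- `C` is of finite type: for all objects `M, N`, the total dimension
`Σ_{n ∈ ℤ} dim_ℂ Hom(M, N⟦n⟧)` is finite. -/
def IsFiniteType [Linear ℂ C] : Prop :=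
  ∀ M N : C, {n : ℤ | ¬ Subsingleton (M ⟶ N⟦n⟧)}.Finite ∧
    ∀ n : ℤ, FiniteDimensional ℂ (M ⟶ N⟦n⟧)

/-- A set of objects is a thick triangulated subcategory: closed under isomorphisms,
shifts, cones and direct summands. -/
structure IsThick (S : Set C) : Prop where
  mem_of_iso : ∀ {X Y : C}, (X ≅ Y) → X ∈ S → Y ∈ S
  shift_mem : ∀ (X : C) (n : ℤ), X ∈ S → X⟦n⟧ ∈ S
  cone_mem : ∀ (T : Triangle C), T ∈ (distTriang C) → T.obj₁ ∈ S → T.obj₂ ∈ S → T.obj₃ ∈ S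
  summand_mem : ∀ (X Y : C), (X ⊞ Y) ∈ S → X ∈ S

/-- `⟨M⟩`, the smallest thick triangulated subcategory containing `M`. -/
def thickClosure (M : C) : Set C :=
  ⋂₀ {S : Set C | IsThick C S ∧ M ∈ S}

/-- `G` is a split-generator of `C` if `⟨G⟩ = C`. -/
def IsSplitGenerator (G : C) : Prop := ∀ X : C, X ∈ thickClosure C G

open Classical in
/-- The complexity `δ_{C,t}(M, N)` of `N` with respect to `M`. -/
noncomputable def complexity (t : ℝ) (M N : C) : ℝ≥0∞ :=
  if IsZero N then 0
  else if N ∈ thickClosure C M then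
    sInf {c : ℝ≥0∞ |
      ∃ (p : ℕ) (_ : 0 < p) (n : Fin p → ℤ) (A : Fin (p + 1) → C) (N' : C),
        IsZero (A 0) ∧ Nonempty (A (Fin.last p) ≅ N ⊞ N') ∧
        (∀ i : Fin p,
          ∃ (f : A i.castSucc ⟶ A i.succ) (g : A i.succ ⟶ M⟦n i⟧)
            (h : M⟦n i⟧ ⟶ (A i.castSucc)⟦(1 : ℤ)⟧),
              Triangle.mk f g h ∈ (distTriang C)) ∧
        c = ∑ i : Fin p, ENNReal.ofReal (Real.exp ((n i : ℝ) * t))}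
  else ⊤

/-- Iterated composition `Fⁿ` of an endofunctor. -/
def iter (F : C ⥤ C) : ℕ → C ⥤ C
  | 0 => 𝟭 C
  | n + 1 => iter F n ⋙ F

/-- The entropy `h_t(F)` of an endofunctor `F`, computed with the split-generator `G`
(the defining limit exists and agrees with the `limsup` used here). -/
noncomputable def entropy (F : C ⥤ C) (G : C) (t : ℝ) : EReal :=
  Filter.atTop.limsup fun m : ℕ =>
    (((m : ℝ)⁻¹ : ℝ) : EReal) * (complexity C t G ((iter C F m).obj G)).log

end Defs

set_option linter.unusedSectionVars false

/-! ### Finite-dimensional linear algebra -/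

section FiniteDimensional

/-- Fitting: a non-nilpotent element `a` of a finite-dimensional algebra divides a nonzero
idempotent, which is a polynomial in `a`. -/
lemma exists_idempotent_of_not_isNilpotent {K A : Type*} [Field K] [Ring A] [Algebra K A]
    [FiniteDimensional K A] (a : A) (ha : ¬ IsNilpotent a) :
    ∃ e s : A, e * e = e ∧ e ≠ 0 ∧ e = a * s ∧ e = s * a := by
  have hint : IsIntegral K a := Algebra.IsIntegral.isIntegral a
  obtain ⟨ν, hν, hX⟩ := Polynomial.exists_eq_pow_rootMultiplicity_mul_and_not_dvd
    (minpoly K a) (minpoly.ne_zero hint) 0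
  set k := (minpoly K a).rootMultiplicity 0
  rw [Polynomial.C_0, sub_zero] at hν hX
  have hcop : IsCoprime (Polynomial.X ^ (k + 1) : Polynomial K) ν :=
    ((Polynomial.irreducible_X.coprime_iff_not_dvd).2 hX).pow_left
  obtain ⟨u, v, huv⟩ := hcop
  have hann : a ^ k * Polynomial.aeval a ν = 0 := by
    have := minpoly.aeval K a
    rw [hν] at this
    simpa using this
  have huv' : Polynomial.aeval a u * a ^ (k + 1) + Polynomial.aeval a v * Polynomial.aeval a ν
      = 1 := by
    have := congrArg (Polynomial.aeval a) huv
    simpa using this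
  have hcomm : ∀ p q : Polynomial K, Polynomial.aeval a p * Polynomial.aeval a q
      = Polynomial.aeval a q * Polynomial.aeval a p := by
    intro p q
    rw [← map_mul, mul_comm, map_mul]
  have hpow : ∀ m : ℕ, Polynomial.aeval a (Polynomial.X ^ m : Polynomial K) = a ^ m := by simp
  set e := Polynomial.aeval a u * a ^ (k + 1) with he
  have hann' : a ^ k * (1 - e) = 0 := by
    have h1 : 1 - e = Polynomial.aeval a v * Polynomial.aeval a ν := by rw [← huv']; abel
    rw [h1, hcomm, ← mul_assoc, hann, zero_mul]
  refine ⟨e, Polynomial.aeval a u * a ^ k, ?_, ?_, ?_, ?_⟩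
  · have : e * (1 - e) = 0 := by
      have h2 : e = Polynomial.aeval a u * a * a ^ k := by rw [he, pow_succ', mul_assoc]
      calc e * (1 - e) = Polynomial.aeval a u * a * a ^ k * (1 - e) := by rw [← h2]
        _ = 0 := by rw [mul_assoc, hann', mul_zero]
    rw [mul_sub, mul_one, sub_eq_zero] at this
    exact this.symm
  · intro h0
    apply ha
    refine ⟨k, ?_⟩
    rw [h0, sub_zero, mul_one] at hann'
    exact hann'
  · have := hcomm u Polynomial.X
    rw [Polynomial.aeval_X] at this
    rw [← mul_assoc, ← this, he, pow_succ', mul_assoc]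
  · rw [he, pow_succ, mul_assoc]

/-- In characteristic zero, an idempotent which is a sum of nilpotents vanishes: the trace of
the regular representation kills nilpotents, and it computes the rank of idempotents. -/
lemma eq_zero_of_sum_isNilpotent {K A : Type*} [Field K] [CharZero K] [Ring A] [Algebra K A]
    [FiniteDimensional K A] {p : A} (hp : p * p = p) {ι : Type*} (s : Finset ι) (a : ι → A)
    (ha : ∀ i, IsNilpotent (a i)) (hsum : p = ∑ i ∈ s, a i) : p = 0 := by
  let L := Algebra.lmul K A
  have h1 : LinearMap.trace K A (L p) = 0 := by
    rw [hsum, map_sum, map_sum]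
    exact Finset.sum_eq_zero fun i _ =>
      (LinearMap.isNilpotent_trace_of_isNilpotent ((ha i).map L)).eq_zero
  have h2 : LinearMap.IsProj (LinearMap.range (L p)) (L p) := by
    refine ⟨fun f => ⟨f, rfl⟩, ?_⟩
    rintro _ ⟨f, rfl⟩
    simp [L, ← mul_assoc, hp]
  have h3 := h2.trace
  rw [h1] at h3
  have h4 : Module.finrank K (LinearMap.range (L p)) = 0 := by exact_mod_cast h3.symm
  rw [Submodule.finrank_eq_zero, LinearMap.range_eq_bot] at h4
  simpa [L] using congrArg (fun l => l (1 : A)) h4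

lemma finrank_eq_map_add_inf_ker {K V X : Type*} [Field K] [AddCommGroup V] [Module K V]
    [AddCommGroup X] [Module K X] [FiniteDimensional K V] (P : Submodule K V) (v : V →ₗ[K] X) :
    Module.finrank K P = Module.finrank K (P.map v) +
      Module.finrank K (P ⊓ LinearMap.ker v : Submodule K V) := by
  have h := LinearMap.finrank_range_add_finrank_ker (v.domRestrict P)
  rw [LinearMap.range_domRestrict] at h
  rw [← h, ← Submodule.finrank_map_subtype_eq P (LinearMap.ker (v.domRestrict P))]
  suffices hs : P ⊓ LinearMap.ker v = (LinearMap.ker (v.domRestrict P)).map P.subtype by rw [hs]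
  ext x
  simp only [Submodule.mem_map, LinearMap.mem_ker, LinearMap.domRestrict_apply,
    Submodule.coe_subtype, Submodule.mem_inf]
  aesop

end FiniteDimensional

/-! ### Objects with equal dimensions of `Hom` spaces -/

section HomFinite

variable {C : Type u} [Category.{v} C] [Preadditive C] [HasZeroObject C]
  [HasShift C ℤ] [∀ n : ℤ, (shiftFunctor C n).Additive] [Pretriangulated C] [Linear ℂ C]

lemma IsFiniteType.finiteDimensional (hft : IsFiniteType C) (X Y : C) :
    FiniteDimensional ℂ (X ⟶ Y) := by
  have := (hft X Y).2 0
  exact LinearEquiv.finiteDimensional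
    (Linear.homCongr ℂ (Iso.refl X) ((shiftFunctorZero C ℤ).app Y))

/-- The subspace `p ≫ Hom(X, Y)` of `Hom(X, Y)`. For an idempotent `p` it is the space of
morphisms to `Y` from the (possibly only virtual) direct summand of `X` cut out by `p`. -/
def precompRange {X : C} (p : X ⟶ X) (Y : C) : Submodule ℂ (X ⟶ Y) :=
  LinearMap.range (Linear.leftComp ℂ Y p)

lemma mem_precompRange {X : C} {p : X ⟶ X} {Y : C} {f : X ⟶ Y} :
    f ∈ precompRange p Y ↔ ∃ g : X ⟶ Y, p ≫ g = f := Iff.rfl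

/-- The dimension of `p ≫ Hom(X, V) ≫ w`. -/
noncomputable def postRank {X : C} (p : X ⟶ X) {V Y : C} (w : V ⟶ Y) : ℕ :=
  Module.finrank ℂ ((precompRange p V).map (Linear.rightComp ℂ X w))

lemma postRank_neg {X : C} (p : X ⟶ X) {V Y : C} (w : V ⟶ Y) :
    postRank p (-w) = postRank p w := by
  have : Linear.rightComp ℂ X (-w) = -Linear.rightComp ℂ X w := by
    ext f; simp
  rw [postRank, postRank, this, Submodule.map_neg]

lemma finrank_precompRange (hft : IsFiniteType C) {X : C} {p : X ⟶ X} (hp : p ≫ p = p)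
    (T : Triangle C) (hT : T ∈ distTriang C) :
    Module.finrank ℂ (precompRange p T.obj₂) = postRank p T.mor₁ + postRank p T.mor₂ := by
  have := hft.finiteDimensional X T.obj₂
  rw [finrank_eq_map_add_inf_ker _ (Linear.rightComp ℂ X T.mor₂), add_comm]
  suffices hs : precompRange p T.obj₂ ⊓ LinearMap.ker (Linear.rightComp ℂ X T.mor₂) =
      (precompRange p T.obj₁).map (Linear.rightComp ℂ X T.mor₁) by rw [hs]; rfl
  ext f
  simp only [Submodule.mem_inf, LinearMap.mem_ker, Linear.rightComp_apply, Submodule.mem_map,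
    mem_precompRange]
  constructor
  · rintro ⟨⟨g, rfl⟩, hg⟩
    obtain ⟨k, hk⟩ := T.coyoneda_exact₂ hT _ hg
    exact ⟨p ≫ k, ⟨k, rfl⟩, by rw [Category.assoc, ← hk, reassoc_of% hp]⟩
  · rintro ⟨_, ⟨k, rfl⟩, rfl⟩
    refine ⟨⟨k ≫ T.mor₁, by simp⟩, ?_⟩
    simp [comp_distTriang_mor_zero₁₂ T hT]

/-- If the summands `(X, p)` and `(X', p')` have the same dimension of `Hom` into every object,
then every morphism induces maps of the same rank on these `Hom` spaces. In a distinguished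
triangle the claims for two consecutive morphisms are equivalent, so the claim for `w` is
equivalent to that for `w⟦n⟧`, which is trivial for large `n`. -/
lemma postRank_eq (hft : IsFiniteType C) {X X' : C} {p : X ⟶ X} {p' : X' ⟶ X'}
    (hp : p ≫ p = p) (hp' : p' ≫ p' = p')
    (h : ∀ Y : C, Module.finrank ℂ (precompRange p Y) = Module.finrank ℂ (precompRange p' Y))
    {V Y : C} (w : V ⟶ Y) : postRank p w = postRank p' w := by
  have step : ∀ (T : Triangle C), T ∈ distTriang C →
      postRank p T.mor₂ = postRank p' T.mor₂ → postRank p T.mor₁ = postRank p' T.mor₁ := by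
    intro T hT h2
    have h3 := h T.obj₂
    rw [finrank_precompRange hft hp T hT, finrank_precompRange hft hp' T hT] at h3
    omega
  have key : ∀ (n : ℕ) {V Y : C} (w : V ⟶ Y),
      (∀ k : ℤ, (n : ℤ) ≤ k → Subsingleton (X ⟶ Y⟦k⟧) ∧ Subsingleton (X' ⟶ Y⟦k⟧)) →
      postRank p w = postRank p' w := by
    intro n
    induction n with
    | zero =>
      intro V Y w hk
      obtain ⟨h1, h2⟩ := hk 0 le_rfl
      have h1' : Subsingleton (X ⟶ Y) :=
        (Linear.homCongr ℂ (Iso.refl X) ((shiftFunctorZero C ℤ).app Y)).symm.toEquiv.subsingleton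
      have h2' : Subsingleton (X' ⟶ Y) :=
        (Linear.homCongr ℂ (Iso.refl X') ((shiftFunctorZero C ℤ).app Y)).symm.toEquiv.subsingleton
      simp [postRank, Module.finrank_zero_of_subsingleton]
    | succ n ih =>
      intro V Y w hk
      obtain ⟨Z, g, h, hT⟩ := distinguished_cocone_triangle w
      refine step _ hT (step _ (rot_of_distTriang _ hT)
        (step _ (rot_of_distTriang _ (rot_of_distTriang _ hT)) ?_))
      change postRank p (-(w⟦(1 : ℤ)⟧')) = postRank p' (-(w⟦(1 : ℤ)⟧'))
      rw [postRank_neg, postRank_neg]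
      refine ih _ fun k hkn => ?_
      obtain ⟨h1, h2⟩ := hk (1 + k) (by push_cast; omega)
      exact ⟨(Linear.homCongr ℂ (Iso.refl X)
          ((shiftFunctorAdd C (1 : ℤ) k).app Y)).symm.toEquiv.subsingleton,
        (Linear.homCongr ℂ (Iso.refl X')
          ((shiftFunctorAdd C (1 : ℤ) k).app Y)).symm.toEquiv.subsingleton⟩
  obtain ⟨b, hb⟩ := ((hft X Y).1.union (hft X' Y).1).bddAbove
  refine key (b.toNat + 1) w fun k hk => ?_
  by_contra hcon
  have : k ≤ b := hb (by
    by_cases h1 : Subsingleton (X ⟶ Y⟦k⟧)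
    · exact Or.inr fun h2 => hcon ⟨h1, h2⟩
    · exact Or.inl h1)
  omega

lemma finrank_precompRange_compl (hft : IsFiniteType C) {X : C} {p : X ⟶ X} (hp : p ≫ p = p)
    (Y : C) : Module.finrank ℂ (X ⟶ Y) = Module.finrank ℂ (precompRange p Y) +
      Module.finrank ℂ (precompRange (𝟙 X - p) Y) := by
  have := hft.finiteDimensional X Y
  rw [← LinearMap.finrank_range_add_finrank_ker (Linear.leftComp ℂ Y p)]
  suffices hs : LinearMap.ker (Linear.leftComp ℂ Y p) = precompRange (𝟙 X - p) Y by rw [hs]; rfl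
  ext f
  rw [LinearMap.mem_ker, mem_precompRange, Linear.leftComp_apply]
  constructor
  · intro h
    exact ⟨f, by simp [h]⟩
  · rintro ⟨g, rfl⟩
    simp [reassoc_of% hp]

lemma finrank_precompRange_le (hft : IsFiniteType C) {X X' : C} (x : X ⟶ X') (y : X' ⟶ X)
    (hy : y ≫ x ≫ y = y) (Y : C) :
    Module.finrank ℂ (precompRange (x ≫ y) Y) ≤ Module.finrank ℂ (precompRange (y ≫ x) Y) := by
  have := hft.finiteDimensional X' Y
  have hle : precompRange (x ≫ y) Y ≤ (precompRange (y ≫ x) Y).map (Linear.leftComp ℂ Y x) := by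
    rintro _ ⟨f, rfl⟩
    refine ⟨(y ≫ x) ≫ y ≫ f, ⟨_, rfl⟩, ?_⟩
    have hy' := hy =≫ f
    simp only [Category.assoc] at hy'
    simp [hy']
  have := hft.finiteDimensional X Y
  exact (Submodule.finrank_mono hle).trans (Submodule.finrank_map_le _ _)

/-- One step in splitting off common summands. Suppose `Hom(Z, -)` and `Hom(W, -)` have the same
dimensions and `x ≫ y`, `y ≫ x` are idempotents cutting out isomorphic summands of `Z` and `W`.
If this summand is not all of `Z`, then the complements have a common nonzero summand as well,
cut out in `Z` by the idempotent `e = x' ≫ y'`. -/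
lemma exists_larger_summand (hft : IsFiniteType C) {Z W : C}
    (hdim : ∀ T : C, Module.finrank ℂ (Z ⟶ T) = Module.finrank ℂ (W ⟶ T))
    (x : Z ⟶ W) (y : W ⟶ Z) (hx : x ≫ y ≫ x = x) (hy : y ≫ x ≫ y = y)
    (hne : 𝟙 Z - x ≫ y ≠ 0) :
    ∃ (e : Z ⟶ Z) (x' : Z ⟶ W) (y' : W ⟶ Z), e ≠ 0 ∧ e ≫ e = e ∧ x' ≫ y' = e ∧
      e ≫ x' = x' ∧ y' ≫ e = y' ∧ (x ≫ y) ≫ e = 0 ∧ e ≫ (x ≫ y) = 0 ∧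
      x ≫ y' = 0 ∧ x' ≫ y = 0 := by
  have := hft.finiteDimensional Z Z
  have := hft.finiteDimensional W Z
  have : FiniteDimensional ℂ (End Z) := hft.finiteDimensional Z Z
  set p' : Z ⟶ Z := 𝟙 Z - x ≫ y with hp'def
  set q' : W ⟶ W := 𝟙 W - y ≫ x with hq'def
  have hp : (x ≫ y) ≫ (x ≫ y) = x ≫ y := by simp [hy]
  have hq : (y ≫ x) ≫ (y ≫ x) = y ≫ x := by simp [hx]
  have hp' : p' ≫ p' = p' := by
    simp only [hp'def, Preadditive.sub_comp, Preadditive.comp_sub, hp, Category.comp_id,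
      Category.id_comp]; abel
  have hq' : q' ≫ q' = q' := by
    simp only [hq'def, Preadditive.sub_comp, Preadditive.comp_sub, hq, Category.comp_id,
      Category.id_comp]; abel
  have hdim' : ∀ Y : C, Module.finrank ℂ (precompRange p' Y) =
      Module.finrank ℂ (precompRange q' Y) := by
    intro Y
    have h1 := finrank_precompRange_compl hft hp Y
    have h2 := finrank_precompRange_compl hft hq Y
    have h3 := finrank_precompRange_le hft x y hy Y
    have h4 := finrank_precompRange_le hft y x hx Y
    have h5 := hdim Y
    change Module.finrank ℂ (precompRange (𝟙 Z - x ≫ y) Y) =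
      Module.finrank ℂ (precompRange (𝟙 W - y ≫ x) Y)
    omega
  -- `β` is an approximation of `(Z, p')` by copies of `(W, q')`, and `w` is its cone.
  let b := Module.finBasis ℂ (W ⟶ Z)
  let h := Module.finrank ℂ (W ⟶ Z)
  let β : (⨁ fun _ : Fin h => W) ⟶ Z := biproduct.desc fun i => q' ≫ b i ≫ p'
  obtain ⟨K, w, z, hT⟩ := distinguished_cocone_triangle β
  have hβw : β ≫ w = 0 := comp_distTriang_mor_zero₁₂ _ hT
  have hb : ∀ i, q' ≫ b i ≫ p' ≫ w = 0 := by
    intro i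
    have := biproduct.ι (fun _ : Fin h => W) i ≫= hβw
    simpa [β] using this
  have hg : ∀ g : W ⟶ Z, q' ≫ g ≫ p' ≫ w = 0 := by
    intro g
    have : (Linear.leftComp ℂ K q').comp (Linear.rightComp ℂ W (p' ≫ w)) = 0 :=
      b.ext fun i => by simpa using hb i
    simpa using LinearMap.congr_fun this g
  have hrank : postRank q' (p' ≫ w) = 0 := by
    have : (precompRange q' Z).map (Linear.rightComp ℂ W (p' ≫ w)) = ⊥ := by
      rw [eq_bot_iff]
      rintro _ ⟨_, ⟨g, rfl⟩, rfl⟩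
      simpa using hg g
    rw [postRank, this, finrank_bot]
  rw [← postRank_eq hft hp' hq' hdim'] at hrank
  have hp'w : p' ≫ w = 0 := by
    have := hft.finiteDimensional Z K
    have h0 := Submodule.finrank_eq_zero.1 hrank
    have hmem : p' ≫ p' ≫ w ∈ (precompRange p' Z).map (Linear.rightComp ℂ Z (p' ≫ w)) :=
      ⟨p', ⟨𝟙 Z, by simp⟩, rfl⟩
    rw [h0, Submodule.mem_bot, reassoc_of% hp'] at hmem
    exact hmem
  obtain ⟨γ, hγ⟩ : ∃ γ : Z ⟶ ⨁ (fun _ : Fin h => W), p' = γ ≫ β :=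
    Triangle.coyoneda_exact₂ _ hT p' hp'w
  let xs : Fin h → (Z ⟶ W) := fun i => p' ≫ γ ≫ biproduct.π _ i ≫ q'
  let ys : Fin h → (W ⟶ Z) := fun i => q' ≫ b i ≫ p'
  have hsum : p' = ∑ i, xs i ≫ ys i := by
    have h1 : p' = p' ≫ γ ≫ β := by
      conv_lhs => rw [← hp']
      exact congrArg (p' ≫ ·) hγ
    rw [h1]
    have h2 : β = ∑ i, biproduct.π (fun _ : Fin h => W) i ≫ q' ≫ b i ≫ p' :=
      biproduct.desc_eq
    rw [h2, Preadditive.comp_sum, Preadditive.comp_sum]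
    refine Finset.sum_congr rfl fun i _ => ?_
    simp [xs, ys, reassoc_of% hq']
  obtain ⟨i, hi⟩ : ∃ i, ¬ IsNilpotent (R := End Z) (xs i ≫ ys i) := by
    by_contra hcon
    push Not at hcon
    exact hne (eq_zero_of_sum_isNilpotent (K := ℂ) (A := End Z) hp' Finset.univ
      (fun i => xs i ≫ ys i) hcon hsum)
  obtain ⟨e, s, hee, he0, hes, hse⟩ := exists_idempotent_of_not_isNilpotent (K := ℂ) _ hi
  -- Multiplication in `End Z` is composition in the opposite order.
  change e ≫ e = e at hee
  change e = s ≫ xs i ≫ ys i at hes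
  change e = (xs i ≫ ys i) ≫ s at hse
  have hpp' : (x ≫ y) ≫ p' = 0 := by simp [hp'def, Preadditive.comp_sub, reassoc_of% hx]
  have hp'p : p' ≫ x ≫ y = 0 := by
    simp only [hp'def, Preadditive.sub_comp, Category.id_comp, hp, sub_self]
  have hxq' : x ≫ q' = 0 := by simp [hq'def, hx]
  have hq'y : q' ≫ y = 0 := by simp [hq'def, hy]
  have hp'e : p' ≫ e = e := by rw [hse]; simp [xs, reassoc_of% hp']
  have hep' : e ≫ p' = e := by rw [hes]; simp [ys, hp']
  refine ⟨e, e ≫ xs i, ys i ≫ s ≫ e, he0, hee, ?_, ?_, ?_, ?_, ?_, ?_, ?_⟩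
  · have : xs i ≫ ys i ≫ s ≫ e = e := by
      have := hse =≫ e
      rw [hee] at this
      simpa using this.symm
    rw [Category.assoc, this, hee]
  · rw [reassoc_of% hee]
  · simp [hee]
  · rw [← hp'e, ← Category.assoc, hpp', zero_comp]
  · rw [← hep', Category.assoc, hp'p, comp_zero]
  · simp [ys, reassoc_of% hxq']
  · simp [xs, hq'y]

/-- If `Hom(Z, -)` and `Hom(W, -)` have the same dimensions on all objects, then `Z` is a retract
of `W`: split off common summands of `Z` and `W` until nothing is left of `Z`. -/
lemma nonempty_retract_of_finrank_eq (hft : IsFiniteType C) {Z W : C}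
    (hdim : ∀ T : C, Module.finrank ℂ (Z ⟶ T) = Module.finrank ℂ (W ⟶ T)) :
    Nonempty (Retract Z W) := by
  have := hft.finiteDimensional Z Z
  have key : ∀ (n : ℕ) (x : Z ⟶ W) (y : W ⟶ Z), x ≫ y ≫ x = x → y ≫ x ≫ y = y →
      Module.finrank ℂ (precompRange (𝟙 Z - x ≫ y) Z) = n → Nonempty (Retract Z W) := by
    intro n
    induction n using Nat.strong_induction_on with
    | _ n ih =>
      intro x y hx hy hn
      by_cases hne : 𝟙 Z - x ≫ y = 0
      · exact ⟨⟨x, y, (sub_eq_zero.1 hne).symm⟩⟩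
      obtain ⟨e, x', y', he0, hee, hxy, hex, hye, hpe, hep, hxy', hx'y⟩ :=
        exists_larger_summand hft hdim x y hx hy hne
      have hXY : (x + x') ≫ (y + y') = x ≫ y + e := by
        simp [hxy', hx'y, hxy]
      have hpx' : x ≫ y ≫ x' = 0 := by
        rw [← hex]
        simpa using hpe =≫ x'
      have hex0 : e ≫ x = 0 := by
        rw [← hx]
        simpa using hep =≫ x
      have hyp : y' ≫ x ≫ y = 0 := by
        rw [← hye]
        simpa using y' ≫= hep
      have hye0 : y ≫ e = 0 := by
        rw [← hy]
        simpa using y ≫= hpe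
      refine ih _ ?_ (x + x') (y + y') ?_ ?_ rfl
      · rw [← hn, hXY]
        refine Submodule.finrank_lt_finrank_of_lt (lt_of_le_of_ne ?_ fun heq => he0 ?_)
        · rintro _ ⟨f, rfl⟩
          refine ⟨(𝟙 Z - (x ≫ y + e)) ≫ f, ?_⟩
          have : (𝟙 Z - x ≫ y) ≫ (𝟙 Z - (x ≫ y + e)) = 𝟙 Z - (x ≫ y + e) := by
            have hp : (x ≫ y) ≫ (x ≫ y) = x ≫ y := by simp [hy]
            simp only [Preadditive.sub_comp, Preadditive.comp_sub, Preadditive.comp_add, hp, hpe,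
              Category.comp_id, Category.id_comp]
            abel
          simp only [Linear.leftComp_apply]
          rw [← Category.assoc, this]
        · have hmem : e ∈ precompRange (𝟙 Z - x ≫ y) Z := by
            refine ⟨e, ?_⟩
            simp only [Linear.leftComp_apply, Preadditive.sub_comp, hpe, Category.id_comp,
              sub_zero]
          rw [← heq] at hmem
          obtain ⟨f, hf⟩ := hmem
          simp only [Linear.leftComp_apply] at hf
          calc e = e ≫ e := hee.symm
            _ = e ≫ ((𝟙 Z - (x ≫ y + e)) ≫ f) := by rw [hf]
            _ = (e ≫ (𝟙 Z - (x ≫ y + e))) ≫ f := (Category.assoc _ _ _).symm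
            _ = 0 := by
              simp only [Preadditive.comp_sub, Preadditive.comp_add, hep, hee, Category.comp_id,
                zero_add, sub_self, zero_comp]
      · rw [← Category.assoc, hXY]
        simp [hx, hpx', hex0, hex]
      · rw [hXY]
        simp [hy, hyp, hye0, hye]
  refine key _ 0 0 (by simp) (by simp) rfl

/-! ### A weak octahedral axiom -/

/-- The rank of the map `Hom(Y, T) → Hom(X, T)` induced by `u : X ⟶ Y`. -/
noncomputable def preRank {X Y : C} (u : X ⟶ Y) (T : C) : ℕ :=
  Module.finrank ℂ (LinearMap.range (Linear.leftComp ℂ T u))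

lemma preRank_neg {X Y : C} (u : X ⟶ Y) (T : C) : preRank (-u) T = preRank u T := by
  have : Linear.leftComp ℂ T (-u) = -Linear.leftComp ℂ T u := by
    ext f; simp
  rw [preRank, preRank, this, LinearMap.range_neg]

lemma finrank_hom_eq_preRank (hft : IsFiniteType C) (D : Triangle C) (hD : D ∈ distTriang C)
    (T : C) : Module.finrank ℂ (D.obj₂ ⟶ T) = preRank D.mor₁ T + preRank D.mor₂ T := by
  have := hft.finiteDimensional D.obj₂ T
  rw [← LinearMap.finrank_range_add_finrank_ker (Linear.leftComp ℂ T D.mor₁)]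
  suffices hs : LinearMap.ker (Linear.leftComp ℂ T D.mor₁) =
      LinearMap.range (Linear.leftComp ℂ T D.mor₂) by rw [hs]; rfl
  ext u
  rw [LinearMap.mem_ker, LinearMap.mem_range, Linear.leftComp_apply]
  constructor
  · intro h
    obtain ⟨v, hv⟩ := Triangle.yoneda_exact₂ D hD u h
    exact ⟨v, hv.symm⟩
  · rintro ⟨v, rfl⟩
    rw [Linear.leftComp_apply, ← Category.assoc, comp_distTriang_mor_zero₁₂ D hD, zero_comp]

/-- The rank of a morphism `g` of cones induced by a commutative square, in terms of the ranks of
the given morphisms. -/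
lemma preRank_add_preRank_comp (hft : IsFiniteType C) {N₁ N M S A A₁ : C} (i : N₁ ⟶ N)
    (p : N ⟶ M) (d : M ⟶ S) (f : N ⟶ A) (a : A ⟶ A₁) (e : A₁ ⟶ S) (g : M ⟶ A₁)
    (hpg : p ≫ g = f ≫ a) (hge : g ≫ e = d) (hpd : p ≫ d = 0) (hfa : i ≫ f ≫ a = 0) (T : C)
    (hM : ∀ u : M ⟶ T, p ≫ u = 0 → ∃ v, u = d ≫ v)
    (hA : ∀ u : A ⟶ T, (i ≫ f) ≫ u = 0 → ∃ v, u = a ≫ v) :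
    preRank g T + preRank (i ≫ f) T = preRank d T + preRank f T := by
  have := hft.finiteDimensional M T
  have := hft.finiteDimensional N T
  have h1 := finrank_eq_map_add_inf_ker (LinearMap.range (Linear.leftComp ℂ T g))
    (Linear.leftComp ℂ T p)
  have h2 := finrank_eq_map_add_inf_ker (LinearMap.range (Linear.leftComp ℂ T f))
    (Linear.leftComp ℂ T i)
  have h3 : LinearMap.range (Linear.leftComp ℂ T g) ⊓ LinearMap.ker (Linear.leftComp ℂ T p) =
      LinearMap.range (Linear.leftComp ℂ T d) := by
    ext u
    simp only [Submodule.mem_inf, LinearMap.mem_range, LinearMap.mem_ker, Linear.leftComp_apply]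
    constructor
    · rintro ⟨-, hu⟩
      obtain ⟨v, hv⟩ := hM u hu
      exact ⟨v, hv.symm⟩
    · rintro ⟨v, rfl⟩
      exact ⟨⟨e ≫ v, by rw [← Category.assoc, hge]⟩, by rw [← Category.assoc, hpd, zero_comp]⟩
  have h4 : (LinearMap.range (Linear.leftComp ℂ T g)).map (Linear.leftComp ℂ T p) =
      LinearMap.range (Linear.leftComp ℂ T f) ⊓ LinearMap.ker (Linear.leftComp ℂ T i) := by
    ext u
    simp only [Submodule.mem_inf, LinearMap.mem_range, LinearMap.mem_ker, Linear.leftComp_apply,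
      Submodule.mem_map]
    constructor
    · rintro ⟨_, ⟨v, rfl⟩, rfl⟩
      refine ⟨⟨a ≫ v, by rw [← Category.assoc, ← hpg, Category.assoc]⟩, ?_⟩
      rw [reassoc_of% hpg, reassoc_of% hfa, zero_comp]
    · rintro ⟨⟨v, rfl⟩, hv⟩
      obtain ⟨w, rfl⟩ := hA v (by rw [Category.assoc, hv])
      exact ⟨g ≫ w, ⟨w, rfl⟩, by rw [reassoc_of% hpg]⟩
  have h5 : (LinearMap.range (Linear.leftComp ℂ T f)).map (Linear.leftComp ℂ T i) =
      LinearMap.range (Linear.leftComp ℂ T (i ≫ f)) := by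
    rw [← LinearMap.range_comp]
    congr 1
    ext u
    simp
  rw [h3, h4] at h1
  rw [h5] at h2
  simp only [preRank]
  omega

lemma finrank_hom_shift_eq_preRank (hft : IsFiniteType C) {X Y Z : C} {u : X ⟶ Y} {v : Y ⟶ Z}
    {w : Z ⟶ X⟦(1 : ℤ)⟧} (hT : Triangle.mk u v w ∈ distTriang C) (T : C) :
    Module.finrank ℂ (Y ⟶ T) = preRank u T + preRank v T ∧
    Module.finrank ℂ (Z ⟶ T) = preRank v T + preRank w T ∧
    Module.finrank ℂ (X⟦(1 : ℤ)⟧ ⟶ T) = preRank w T + preRank (u⟦(1 : ℤ)⟧') T ∧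
    Module.finrank ℂ (Y⟦(1 : ℤ)⟧ ⟶ T) = preRank (u⟦(1 : ℤ)⟧') T + preRank (v⟦(1 : ℤ)⟧') T ∧
    Module.finrank ℂ (Z⟦(1 : ℤ)⟧ ⟶ T) = preRank (v⟦(1 : ℤ)⟧') T + preRank (w⟦(1 : ℤ)⟧') T := by
  have hT1 := rot_of_distTriang _ hT
  have hT2 := rot_of_distTriang _ hT1
  have hT3 := rot_of_distTriang _ hT2
  have hT4 := rot_of_distTriang _ hT3
  have h0 := finrank_hom_eq_preRank hft _ hT T
  have h1 := finrank_hom_eq_preRank hft _ hT1 T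
  have h2 := finrank_hom_eq_preRank hft _ hT2 T
  have h3 := finrank_hom_eq_preRank hft _ hT3 T
  have h4 := finrank_hom_eq_preRank hft _ hT4 T
  simp only [Triangle.rotate, Triangle.mk, preRank_neg] at h0 h1 h2 h3 h4
  exact ⟨h0, h1, h2, h3, h4⟩

/-- A substitute for the octahedral axiom. Let `M` be a cone of `i : N₁ ⟶ N`, let `f : N ⟶ A`,
and let `g` be any morphism from `M` to a cone of `i ≫ f` which is compatible with `f`.
Then a cone of `f` is a retract of a cone of `g`, since `Hom` from both to any object
has the same dimension. -/
lemma nonempty_retract_cone (hft : IsFiniteType C) {N₁ N M A A₁ Z W : C}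
    {i : N₁ ⟶ N} {p : N ⟶ M} {d : M ⟶ N₁⟦(1 : ℤ)⟧} (hN : Triangle.mk i p d ∈ distTriang C)
    {f : N ⟶ A} {b : A ⟶ Z} {c : Z ⟶ N⟦(1 : ℤ)⟧} (hZ : Triangle.mk f b c ∈ distTriang C)
    {a : A ⟶ A₁} {e : A₁ ⟶ N₁⟦(1 : ℤ)⟧} (hA : Triangle.mk (i ≫ f) a e ∈ distTriang C)
    {g : M ⟶ A₁} {r : A₁ ⟶ W} {s : W ⟶ M⟦(1 : ℤ)⟧} (hW : Triangle.mk g r s ∈ distTriang C)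
    (hpg : p ≫ g = f ≫ a) (hge : g ≫ e = d) : Nonempty (Retract Z W) := by
  refine nonempty_retract_of_finrank_eq hft fun T => ?_
  have hpd : p ≫ d = 0 := comp_distTriang_mor_zero₂₃ _ hN
  have hfa : (i ≫ f) ≫ a = 0 := comp_distTriang_mor_zero₁₂ _ hA
  have h0 := preRank_add_preRank_comp hft i p d f a e g hpg hge hpd (by simpa using hfa) T
    (fun u hu => Triangle.yoneda_exact₃ _ hN u hu) (fun u hu => Triangle.yoneda_exact₂ _ hA u hu)
  have h1 := preRank_add_preRank_comp hft (i⟦(1 : ℤ)⟧') (p⟦(1 : ℤ)⟧') (d⟦(1 : ℤ)⟧')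
    (f⟦(1 : ℤ)⟧') (a⟦(1 : ℤ)⟧') (e⟦(1 : ℤ)⟧') (g⟦(1 : ℤ)⟧')
    (by simp only [← Functor.map_comp, hpg]) (by simp only [← Functor.map_comp, hge])
    (by simp only [← Functor.map_comp, hpd, Functor.map_zero])
    (by simp only [← Functor.map_comp, ← Category.assoc, hfa, Functor.map_zero]) T
    (fun u hu => by
      obtain ⟨v, hv⟩ : ∃ v, u = (-(d⟦(1 : ℤ)⟧')) ≫ v := Triangle.yoneda_exact₃ _
        (rot_of_distTriang _ (rot_of_distTriang _ (rot_of_distTriang _ hN))) u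
        (by change (-(p⟦(1 : ℤ)⟧')) ≫ u = 0; simp [hu])
      exact ⟨-v, by simp [hv]⟩)
    (fun u hu => by
      obtain ⟨v, hv⟩ : ∃ v, u = (-(a⟦(1 : ℤ)⟧')) ≫ v := Triangle.yoneda_exact₂ _
        (rot_of_distTriang _ (rot_of_distTriang _ (rot_of_distTriang _ hA))) u
        (by
          change (-((i ≫ f)⟦(1 : ℤ)⟧')) ≫ u = 0
          rw [Functor.map_comp, Preadditive.neg_comp, hu, neg_zero])
      exact ⟨-v, by simp [hv]⟩)
  rw [← Functor.map_comp] at h1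
  have hN' := finrank_hom_shift_eq_preRank hft hN T
  have hZ' := finrank_hom_shift_eq_preRank hft hZ T
  have hA' := finrank_hom_shift_eq_preRank hft hA T
  have hW' := finrank_hom_shift_eq_preRank hft hW T
  omega

end HomFinite

/-! ### Building objects at a cost -/

section Cost

variable {C : Type u} [Category.{v} C] [Preadditive C] [HasZeroObject C]
  [HasShift C ℤ] [∀ n : ℤ, (shiftFunctor C n).Additive] [Pretriangulated C]

/-- `Cost t M c X` says that `X` can be built from `M` at total cost `c`: starting from a zero
object one may attach shifts `M⟦n⟧`, each at cost `exp (n t)`, and pass to retracts at any stage. -/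
inductive Cost (t : ℝ) (M : C) : ℝ≥0∞ → C → Prop
  | zero {X : C} (hX : IsZero X) : Cost t M 0 X
  | step {c : ℝ≥0∞} {A B : C} {n : ℤ} {f : A ⟶ B} {g : B ⟶ M⟦n⟧} {h : M⟦n⟧ ⟶ A⟦(1 : ℤ)⟧}
      (hA : Cost t M c A) (hT : Triangle.mk f g h ∈ distTriang C) :
      Cost t M (c + ENNReal.ofReal (Real.exp ((n : ℝ) * t))) B
  | retract {c : ℝ≥0∞} {A X : C} (hA : Cost t M c A) (r : Retract X A) : Cost t M c X

/-- A retract of morphisms `N ⟶ A⟦1⟧` extends to a retract of the middle objects of the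
triangles. -/
lemma nonempty_retract_of_triangles {A B N A' B' N' : C} {f : A ⟶ B} {g : B ⟶ N}
    {h : N ⟶ A⟦(1 : ℤ)⟧} (hT : Triangle.mk f g h ∈ distTriang C) {f' : A' ⟶ B'} {g' : B' ⟶ N'}
    {h' : N' ⟶ A'⟦(1 : ℤ)⟧} (hT' : Triangle.mk f' g' h' ∈ distTriang C)
    (rA : Retract A A') (rN : Retract N N')
    (hi : h ≫ rA.i⟦(1 : ℤ)⟧' = rN.i ≫ h') (hr : h' ≫ rA.r⟦(1 : ℤ)⟧' = rN.r ≫ h) :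
    Nonempty (Retract B B') := by
  obtain ⟨φ, hφ₁, hφ₂⟩ :=
    complete_distinguished_triangle_morphism₂ _ _ hT hT' rA.i rN.i hi
  obtain ⟨ψ, hψ₁, hψ₂⟩ :=
    complete_distinguished_triangle_morphism₂ _ _ hT' hT rA.r rN.r hr
  change B ⟶ B' at φ
  change B' ⟶ B at ψ
  change f ≫ φ = rA.i ≫ f' at hφ₁
  change g ≫ rN.i = φ ≫ g' at hφ₂
  change f' ≫ ψ = rA.r ≫ f at hψ₁
  change g' ≫ rN.r = ψ ≫ g at hψ₂
  let χ : Triangle.mk f g h ⟶ Triangle.mk f g h :=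
    { hom₁ := 𝟙 A
      hom₂ := φ ≫ ψ
      hom₃ := 𝟙 N
      comm₁ := by
        change f ≫ φ ≫ ψ = 𝟙 A ≫ f
        rw [reassoc_of% hφ₁, hψ₁, rA.retract_assoc, Category.id_comp]
      comm₂ := by
        change g ≫ 𝟙 N = (φ ≫ ψ) ≫ g
        rw [Category.assoc, ← hψ₂, ← reassoc_of% hφ₂, rN.retract]
      comm₃ := by
        change h ≫ (𝟙 A)⟦(1 : ℤ)⟧' = 𝟙 N ≫ h
        simp }
  have hiso : IsIso (φ ≫ ψ) := isIso₂_of_isIso₁₃ χ hT hT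
    (inferInstanceAs (IsIso (𝟙 A))) (inferInstanceAs (IsIso (𝟙 N)))
  exact ⟨⟨φ, ψ ≫ inv (φ ≫ ψ), by rw [← Category.assoc, IsIso.hom_inv_id]⟩⟩

variable {t : ℝ} {M : C}

lemma Cost.of_iso {c : ℝ≥0∞} {X Y : C} (hX : Cost t M c X) (e : X ≅ Y) : Cost t M c Y :=
  hX.retract (Retract.ofIso e.symm)

lemma Cost.of_triangle {c : ℝ≥0∞} (T : Triangle C) (hT : T ∈ distTriang C)
    (h₁ : Cost t M c T.obj₁) {n : ℤ} (e : T.obj₃ ≅ M⟦n⟧) :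
    Cost t M (c + ENNReal.ofReal (Real.exp ((n : ℝ) * t))) T.obj₂ := by
  refine Cost.step (f := T.mor₁) (g := T.mor₂ ≫ e.hom) (h := e.inv ≫ T.mor₃) h₁ ?_
  exact isomorphic_distinguished _ hT _
    (Triangle.isoMk _ _ (Iso.refl _) (Iso.refl _) e.symm
      ((Category.comp_id _).trans (Category.id_comp _).symm)
      (by change (T.mor₂ ≫ e.hom) ≫ e.inv = 𝟙 T.obj₂ ≫ T.mor₂; simp)
      (by change (e.inv ≫ T.mor₃) ≫ (𝟙 T.obj₁)⟦(1 : ℤ)⟧' = e.inv ≫ T.mor₃; simp))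

lemma Cost.self : Cost t M 1 M := by
  have := Cost.of_triangle (t := t) (M := M) _ (contractible_distinguished₁ M)
    (Cost.zero (isZero_zero C)) (n := 0) ((shiftFunctorZero C ℤ).symm.app M)
  simpa using this

lemma Cost.shift {c : ℝ≥0∞} {X : C} (hX : Cost t M c X) (k : ℤ) :
    Cost t M (c * ENNReal.ofReal (Real.exp ((k : ℝ) * t))) (X⟦k⟧) := by
  induction hX with
  | zero hX => simpa using Cost.zero ((shiftFunctor C k).map_isZero hX)
  | @step c A B n f g h hA hT ih =>
    have := Cost.of_triangle _ (Triangle.shift_distinguished _ hT k) ih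
      ((shiftFunctorAdd C n k).symm.app M)
    have hexp : Real.exp (((n + k : ℤ) : ℝ) * t) =
        Real.exp ((n : ℝ) * t) * Real.exp ((k : ℝ) * t) := by
      rw [← Real.exp_add]; push_cast; ring_nf
    rw [hexp, ENNReal.ofReal_mul (Real.exp_pos _).le, ← add_mul] at this
    exact this
  | retract hA r ih => exact ih.retract (r.map _)

lemma rotate_rotate_mem {X Y Z : C} {f : X ⟶ Y} {g : Y ⟶ Z} {h : Z ⟶ X⟦(1 : ℤ)⟧}
    (hT : Triangle.mk f g h ∈ distTriang C) :
    Triangle.mk h (-(f⟦(1 : ℤ)⟧')) (-(g⟦(1 : ℤ)⟧')) ∈ distTriang C :=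
  rot_of_distTriang _ (rot_of_distTriang _ hT)

/-- The cost is subadditive along triangles. Normally this is an application of the
octahedral axiom; its weak form `nonempty_retract_cone` suffices because retracts are free. -/
lemma Cost.add [Linear ℂ C] (hft : IsFiniteType C) {c c' : ℝ≥0∞} {N : C} (hN : Cost t M c N)
    {A B : C} (hA : Cost t M c' A) {f : A ⟶ B} {g : B ⟶ N} {h : N ⟶ A⟦(1 : ℤ)⟧}
    (hT : Triangle.mk f g h ∈ distTriang C) : Cost t M (c' + c) B := by
  induction hN generalizing A B with
  | zero hX =>
    have : IsIso f := (Triangle.isZero₃_iff_isIso₁ _ hT).1 hX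
    simpa using hA.of_iso (asIso f)
  | @step c N₁ N n i p d hN₁ hN ih =>
    obtain ⟨A₁, x, y, hA₁⟩ := distinguished_cocone_triangle₂ (i ≫ h)
    have hA₁' := rotate_rotate_mem hA₁
    obtain ⟨e, he₁, he₂⟩ : ∃ e : M⟦n⟧ ⟶ A₁⟦(1 : ℤ)⟧, p ≫ e = h ≫ (-(x⟦(1 : ℤ)⟧')) ∧
        d ≫ (𝟙 N₁)⟦(1 : ℤ)⟧' = e ≫ (-(y⟦(1 : ℤ)⟧')) :=
      complete_distinguished_triangle_morphism _ _ hN hA₁' (𝟙 N₁) h (Category.id_comp _).symm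
    obtain ⟨W, q, r, hW⟩ := distinguished_cocone_triangle₂ e
    rw [CategoryTheory.Functor.map_id, Category.comp_id] at he₂
    obtain ⟨ρ⟩ := nonempty_retract_cone hft hN (rotate_rotate_mem hT) hA₁'
      (rotate_rotate_mem hW) he₁ he₂.symm
    have hcost := (Cost.step (ih hA hA₁) hW)
    rw [add_assoc] at hcost
    refine hcost.retract ⟨(shiftFunctor C (1 : ℤ)).preimage ρ.i,
      (shiftFunctor C (1 : ℤ)).preimage ρ.r, ?_⟩
    apply (shiftFunctor C (1 : ℤ)).map_injective
    rw [Functor.map_comp, Functor.map_preimage, Functor.map_preimage, ρ.retract,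
      CategoryTheory.Functor.map_id]
  | @retract c N' N hN' r ih =>
    obtain ⟨B', x, y, hB'⟩ := distinguished_cocone_triangle₂ (r.r ≫ h)
    obtain ⟨ρ⟩ := nonempty_retract_of_triangles hT hB' (Retract.refl A) r (by simp) (by simp)
    exact (ih hA hB').retract ρ

lemma Cost.comp [Linear ℂ C] (hft : IsFiniteType C) {c c₀ : ℝ≥0∞} {N X : C}
    (hN : Cost t M c₀ N) (hX : Cost t N c X) : Cost t M (c * c₀) X := by
  induction hX with
  | zero hX => simpa using Cost.zero hX
  | @step c A B n f g h hA hT ih =>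
    rw [add_mul, mul_comm (ENNReal.ofReal _)]
    exact Cost.add hft (hN.shift n) ih hT
  | retract hA r ih => exact ih.retract r

lemma Cost.map {D : Type u₂} [Category.{v₂} D] [Preadditive D] [HasZeroObject D]
    [HasShift D ℤ] [∀ n : ℤ, (shiftFunctor D n).Additive] [Pretriangulated D]
    (F : C ⥤ D) [F.CommShift ℤ] [F.IsTriangulated] {c : ℝ≥0∞} {X : C}
    (hX : Cost t M c X) : Cost t (F.obj M) c (F.obj X) := by
  induction hX with
  | zero hX => exact Cost.zero (F.map_isZero hX)
  | @step c A B n f g h hA hT ih =>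
    exact Cost.of_triangle _ (F.map_distinguished _ hT) ih ((F.commShiftIso n).app M)
  | retract hA r ih => exact ih.retract (r.map F)

lemma IsSplitGenerator.exists_cost [Linear ℂ C] (hft : IsFiniteType C) {G : C}
    (hG : IsSplitGenerator C G) (t : ℝ) (X : C) : ∃ c : ℝ≥0∞, c ≠ ⊤ ∧ Cost t G c X := by
  refine Set.mem_sInter.1 (hG X) {X | ∃ c : ℝ≥0∞, c ≠ ⊤ ∧ Cost t G c X}
    ⟨⟨?_, ?_, ?_, ?_⟩, 1, ENNReal.one_ne_top, Cost.self⟩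
  · rintro X Y e ⟨c, hc, hX⟩
    exact ⟨c, hc, hX.of_iso e⟩
  · rintro X n ⟨c, hc, hX⟩
    exact ⟨_, ENNReal.mul_ne_top hc ENNReal.ofReal_ne_top, hX.shift n⟩
  · rintro T hT ⟨c, hc, h₁⟩ ⟨c', hc', h₂⟩
    exact ⟨_, ENNReal.add_ne_top.2 ⟨hc', ENNReal.mul_ne_top hc ENNReal.ofReal_ne_top⟩,
      Cost.add hft (h₁.shift 1) h₂ (rot_of_distTriang _ hT)⟩
  · rintro X Y ⟨c, hc, h⟩
    exact ⟨c, hc, h.retract ⟨biprod.inl, biprod.fst, biprod.inl_fst⟩⟩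

lemma cost_of_tower (p : ℕ) (n : Fin p → ℤ) (A : Fin (p + 1) → C) (h0 : IsZero (A 0))
    (hA : ∀ i : Fin p, ∃ (f : A i.castSucc ⟶ A i.succ) (g : A i.succ ⟶ M⟦n i⟧)
      (h : M⟦n i⟧ ⟶ (A i.castSucc)⟦(1 : ℤ)⟧), Triangle.mk f g h ∈ distTriang C) :
    Cost t M (∑ i : Fin p, ENNReal.ofReal (Real.exp ((n i : ℝ) * t))) (A (Fin.last p)) := by
  induction p with
  | zero => simpa using Cost.zero h0
  | succ p ih =>
    rw [Fin.sum_univ_castSucc]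
    obtain ⟨f, g, h, hT⟩ := hA (Fin.last p)
    exact Cost.step (ih (fun i => n i.castSucc) (fun i => A i.castSucc) h0
      fun i => hA i.castSucc) hT

/-- Retracts can be postponed to the end of the construction. -/
lemma Cost.exists_tower {c : ℝ≥0∞} {X : C} (hX : Cost t M c X) :
    ∃ (p : ℕ) (n : Fin p → ℤ) (A : Fin (p + 1) → C), IsZero (A 0) ∧
      Nonempty (Retract X (A (Fin.last p))) ∧
      (∀ i : Fin p, ∃ (f : A i.castSucc ⟶ A i.succ) (g : A i.succ ⟶ M⟦n i⟧)
        (h : M⟦n i⟧ ⟶ (A i.castSucc)⟦(1 : ℤ)⟧), Triangle.mk f g h ∈ distTriang C) ∧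
      c = ∑ i : Fin p, ENNReal.ofReal (Real.exp ((n i : ℝ) * t)) := by
  induction hX with
  | @zero X hX =>
    exact ⟨0, Fin.elim0, fun _ => X, hX, ⟨Retract.refl X⟩, fun i => i.elim0, by simp⟩
  | @step c A B m f g h hA hT ih =>
    obtain ⟨p, n, A', h0, ⟨r⟩, hA', hc⟩ := ih
    obtain ⟨B', f', g', hT'⟩ := distinguished_cocone_triangle₂ (h ≫ r.i⟦(1 : ℤ)⟧')
    obtain ⟨ρ⟩ := nonempty_retract_of_triangles hT hT' r (Retract.refl _) (by simp)
      (by simp [← Functor.map_comp])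
    refine ⟨p + 1, Fin.snoc (α := fun _ => ℤ) n m, Fin.snoc (α := fun _ => C) A' B', ?_, ?_,
      ?_, ?_⟩
    · rw [← Fin.castSucc_zero, Fin.snoc_castSucc]
      exact h0
    · rw [Fin.snoc_last]
      exact ⟨ρ⟩
    · intro i
      induction i using Fin.lastCases with
      | last =>
        rw [Fin.succ_last, Fin.snoc_last, Fin.snoc_last, Fin.snoc_castSucc]
        exact ⟨_, _, _, hT'⟩
      | cast i =>
        rw [Fin.succ_castSucc, Fin.snoc_castSucc, Fin.snoc_castSucc, Fin.snoc_castSucc]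
        exact hA' i
    · rw [Fin.sum_univ_castSucc, hc]
      simp
  | retract hA r ih =>
    obtain ⟨p, n, A', h0, ⟨r'⟩, h⟩ := ih
    exact ⟨p, n, A', h0, ⟨r.trans r'⟩, h⟩

lemma complexity_le_of_cost {c : ℝ≥0∞} {X : C} (hX : Cost t M c X)
    (hmem : X ∈ thickClosure C M) : complexity C t M X ≤ c := by
  by_cases hzero : IsZero X
  · rw [complexity, if_pos hzero]
    exact zero_le
  rw [complexity, if_neg hzero, if_pos hmem]
  obtain ⟨p, n, A, h0, ⟨r⟩, hA, hc⟩ := hX.exists_tower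
  obtain ⟨N', u, w, hT⟩ := distinguished_cocone_triangle r.i
  have hmono : Mono r.i := (SplitMono.mk r.r r.retract).mono
  obtain ⟨e, -⟩ := exists_iso_binaryBiproduct_of_distTriang _ hT
    (Triangle.mor₃_eq_zero_of_mono₁ _ hT hmono)
  refine sInf_le ⟨p, ?_, n, A, N', h0, ⟨e⟩, hA, hc⟩
  -- A tower of length zero is a zero object, which has no nonzero retract.
  rcases Nat.eq_zero_or_pos p with rfl | hp
  · refine absurd ((IsZero.iff_id_eq_zero X).2 ?_) hzero
    rw [← r.retract, IsZero.eq_zero_of_tgt h0 r.i, zero_comp]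
  · exact hp

/-- For a nonzero object, every lower bound of the costs bounds the complexity from below. -/
lemma le_complexity {X : C} (hX : ¬ IsZero X) {b : ℝ≥0∞}
    (hb : ∀ c, Cost t M c X → b ≤ c) : b ≤ complexity C t M X := by
  rw [complexity, if_neg hX]
  split_ifs with hmem
  · refine le_sInf ?_
    rintro _ ⟨p, hp, n, A, N', h0, ⟨e⟩, hA, rfl⟩
    exact hb _ (((cost_of_tower p n A h0 hA).of_iso e).retract
      ⟨biprod.inl, biprod.fst, biprod.inl_fst⟩)
  · exact le_top

end Cost

/-! ### Comparison of entropies -/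

section Comparison

lemma Cost.iter {C : Type u} [Category.{v} C] [Preadditive C] [HasZeroObject C]
    [HasShift C ℤ] [∀ n : ℤ, (shiftFunctor C n).Additive] [Pretriangulated C]
    (F : C ⥤ C) [F.CommShift ℤ] [F.IsTriangulated] {t : ℝ} {M X : C} {c : ℝ≥0∞}
    (hX : Cost t M c X) (n : ℕ) :
    Cost t ((iter C F n).obj M) c ((iter C F n).obj X) := by
  induction n with
  | zero => exact hX
  | succ n ih => exact ih.map F

lemma nonempty_iter_iso {C₁ : Type u} [Category.{v} C₁] {C₂ : Type u₂} [Category.{v₂} C₂]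
    {F₁ : C₁ ⥤ C₁} {F₂ : C₂ ⥤ C₂} {F' : C₂ ⥤ C₁} (α : F₂ ⋙ F' ≅ F' ⋙ F₁) (X : C₂) (n : ℕ) :
    Nonempty ((iter C₁ F₁ n).obj (F'.obj X) ≅ F'.obj ((iter C₂ F₂ n).obj X)) := by
  induction n with
  | zero => exact ⟨Iso.refl _⟩
  | succ n ih => exact ih.map fun e => F₁.mapIso e ≪≫ (α.app _).symm

/-- A bounded factor does not affect exponential growth rates. -/
lemma limsup_log_le {x y : ℕ → ℝ≥0∞} {K : ℝ≥0∞} (hK0 : K ≠ 0) (hK : K ≠ ⊤)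
    (h : ∀ m, x m ≤ K * y m) :
    (atTop.limsup fun m : ℕ => (((m : ℝ)⁻¹ : ℝ) : EReal) * (x m).log) ≤
      atTop.limsup fun m : ℕ => (((m : ℝ)⁻¹ : ℝ) : EReal) * (y m).log := by
  have hlim : (atTop.limsup fun m : ℕ => (((m : ℝ)⁻¹ : ℝ) : EReal) * K.log) = 0 := by
    apply Tendsto.limsup_eq
    rw [ENNReal.log_pos_real hK0 hK]
    simp only [← EReal.coe_mul]
    rw [← EReal.coe_zero]
    refine (continuous_coe_real_ereal.tendsto _).comp ?_
    simpa using (tendsto_inv_atTop_nhds_zero_nat (𝕜 := ℝ)).mul_const (Real.log K.toReal)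
  have hle : ∀ m : ℕ, (((m : ℝ)⁻¹ : ℝ) : EReal) * (x m).log ≤
      (((m : ℝ)⁻¹ : ℝ) : EReal) * K.log + (((m : ℝ)⁻¹ : ℝ) : EReal) * (y m).log := by
    intro m
    have h0 : (0 : EReal) ≤ (((m : ℝ)⁻¹ : ℝ) : EReal) := EReal.coe_nonneg.2 (by positivity)
    rw [← EReal.left_distrib_of_nonneg_of_ne_top h0 (EReal.coe_ne_top _), ← ENNReal.log_mul_add]
    exact mul_le_mul_of_nonneg_left (ENNReal.log_monotone (h m)) h0
  refine (limsup_le_limsup (Eventually.of_forall hle)).trans ?_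
  refine (EReal.limsup_add_le (Or.inl ?_) (Or.inl ?_)).trans ?_
  · rw [hlim]; exact EReal.zero_ne_bot
  · rw [hlim]; exact EReal.zero_ne_top
  · rw [hlim, zero_add]

end Comparison

/-- If a fully faithful triangulated functor `F' : T₂ ⥤ T₁` admitting both adjoints
intertwines `F₂` and `F₁`, then `h_t(F₂) ≤ h_t(F₁)`. -/
theorem statement_13 {C₁ : Type u} [Category.{v} C₁] [Preadditive C₁] [HasZeroObject C₁]
    [HasShift C₁ ℤ] [∀ n : ℤ, (shiftFunctor C₁ n).Additive] [Pretriangulated C₁] [Linear ℂ C₁]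
    {C₂ : Type u₂} [Category.{v₂} C₂] [Preadditive C₂] [HasZeroObject C₂]
    [HasShift C₂ ℤ] [∀ n : ℤ, (shiftFunctor C₂ n).Additive] [Pretriangulated C₂] [Linear ℂ C₂]
    (hC₁ : ∃ X : C₁, ¬ IsZero X) (hC₂ : ∃ X : C₂, ¬ IsZero X)
    (hft₁ : IsFiniteType C₁) (hft₂ : IsFiniteType C₂)
    (G₁ : C₁) (hG₁ : IsSplitGenerator C₁ G₁) (G₂ : C₂) (hG₂ : IsSplitGenerator C₂ G₂)
    (F₁ : C₁ ⥤ C₁) [F₁.Additive] [F₁.Linear ℂ] [F₁.CommShift ℤ] [F₁.IsTriangulated]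
    (F₂ : C₂ ⥤ C₂) [F₂.Additive] [F₂.Linear ℂ] [F₂.CommShift ℤ] [F₂.IsTriangulated]
    (h₁ : ∀ n : ℕ, ¬ IsZero ((iter C₁ F₁ n).obj G₁))
    (h₂ : ∀ n : ℕ, ¬ IsZero ((iter C₂ F₂ n).obj G₂))
    (F' : C₂ ⥤ C₁) [F'.Additive] [F'.Linear ℂ] [F'.CommShift ℤ] [F'.IsTriangulated]
    [F'.Full] [F'.Faithful] [F'.IsLeftAdjoint] [F'.IsRightAdjoint]
    (hcomm : Nonempty ((F₂ ⋙ F') ≅ (F' ⋙ F₁))) (t : ℝ) :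
    entropy C₂ F₂ G₂ t ≤ entropy C₁ F₁ G₁ t := by
  obtain ⟨α⟩ := hcomm
  let R := F'.rightAdjoint
  let adj : F' ⊣ R := Adjunction.ofIsLeftAdjoint F'
  let _ : R.CommShift ℤ := adj.rightAdjointCommShift ℤ
  have : adj.CommShift ℤ := adj.commShift_of_leftAdjoint ℤ
  have : R.IsTriangulated := adj.isTriangulated_rightAdjoint
  obtain ⟨a, ha, hcosta⟩ := hG₁.exists_cost hft₁ t (F'.obj G₂)
  obtain ⟨b, hb, hcostb⟩ := hG₂.exists_cost hft₂ t (R.obj G₁)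
  have hK : a * b + 1 ≠ ⊤ :=
    ENNReal.add_ne_top.2 ⟨ENNReal.mul_ne_top ha hb, ENNReal.one_ne_top⟩
  have hK0 : a * b + 1 ≠ 0 := by simp
  refine limsup_log_le hK0 hK fun m => ?_
  rw [← ENNReal.div_le_iff' hK0 hK]
  refine le_complexity (h₁ m) fun c hc => ENNReal.div_le_of_le_mul' ?_
  -- `F₁ᵐ F' G₂` is built from `G₁` at cost `a * c`, and `R` maps it to `R F' F₂ᵐ G₂ ≅ F₂ᵐ G₂`.
  have hcost := hcostb.comp hft₂ ((hc.comp hft₁ (hcosta.iter F₁ m)).map R)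
  obtain ⟨e⟩ := nonempty_iter_iso α G₂ m
  have hiso : R.obj ((iter C₁ F₁ m).obj (F'.obj G₂)) ≅ (iter C₂ F₂ m).obj G₂ :=
    R.mapIso e ≪≫ (asIso (adj.unit.app ((iter C₂ F₂ m).obj G₂))).symm
  refine (complexity_le_of_cost (hcost.of_iso hiso) (hG₂ _)).trans ?_
  calc a * c * b = (a * b) * c := by ring
    _ ≤ (a * b + 1) * c := by gcongr; exact le_self_add

end CatEntropy
end

section
/- Let T₁, T₂ be ℂ-linear triangulated categories of finite type with split-generators G₁, G₂ respectively, and F_i a triangulated endofunctor of T_i with F_iⁿG_i ≇ 0 for all n ≥ 0 (i = 1, 2). If there exists an essentially surjective triangulated functor F': T₁ → T₂ such that F'F₁ ≅ F₂F', then h_t(F₂) ≤ h_t(F₁) for all t ∈ ℝ. -/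
/-!
The relation `Built G l N` says that the object `N` is a retract of an object glued from the
shifts `G⟦k⟧`, `k ∈ l`. The complexity of a nonzero object of `⟨G⟩` is the infimum of the costs
`∑ exp (k t)` over such lists `l`.

The categories are only pretriangulated, so the octahedral axiom, on which the usual proof of
`δ(M, P) ≤ δ(M, N) δ(N, P)` relies, is not available. It is replaced by `attach`: if
`D ⟶ W ⟶ L ⟶ D⟦1⟧` is distinguished and `L` is a retract of an object built from cells, then
attaching the same cells to `D` yields an object `E ⟶ W` whose cofibre map `W ⟶ C'` is zero,
so that `W` is a retract of `E`. Consequently costs add up along extensions (`Built.ext`), they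
multiply under change of generator (`Built.trans`), and every object of `⟨M⟩` is built from
finitely many shifts of `M` (`exists_built`).

For the theorem, choose `X` with `F' X ≅ G₂`, and lists `l₀`, `l₁` building `X` from `G₁` and
`F' G₁` from `G₂`. If `l` builds `F₁ᵐ G₁` from `G₁`, then the product of `l` and `l₀` builds
`F₁ᵐ X` from `G₁`, hence `F' F₁ᵐ X ≅ F₂ᵐ G₂` from `F' G₁`; the product with `l₁` builds it from
`G₂`. Thus `δ(G₂, F₂ᵐ G₂) ≤ K δ(G₁, F₁ᵐ G₁)` with `K` independent of `m`, and the factor `K`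
disappears in the growth rate (`limsup_le_of_le_mul`).
-/

open CategoryTheory Limits Pretriangulated Filter
open scoped ENNReal

universe u v u₂ v₂

namespace CatEntropy

lemma isZero_of_retract {C : Type u} [Category.{v} C] [HasZeroMorphisms C]
    {X Y : C} (r : Retract X Y) (h : IsZero Y) : IsZero X := by
  rw [IsZero.iff_id_eq_zero, ← r.retract, h.eq_of_tgt r.i 0, zero_comp]

/-! ### Objects glued from shifts of a given object -/

section Towers

variable {C : Type u} [Category.{v} C] [Preadditive C] [HasZeroObject C]
  [HasShift C ℤ] [∀ n : ℤ, (shiftFunctor C n).Additive] [Pretriangulated C]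

/-- `Tower M l A`: the object `A` is obtained from a zero object by successively attaching
cells isomorphic to the shifts `M⟦k⟧`, `k ∈ l`. The head of `l` is the last attached cell. -/
inductive Tower (M : C) : List ℤ → C → Prop
  | zero {A : C} (hA : IsZero A) : Tower M [] A
  | cons {l : List ℤ} {A B Z : C} {k : ℤ} (f : A ⟶ B) (g : B ⟶ Z) (h : Z ⟶ A⟦(1 : ℤ)⟧)
      (hT : Triangle.mk f g h ∈ distTriang C) (e : Z ≅ M⟦k⟧) (hA : Tower M l A) :
      Tower M (k :: l) B

/-- `Built M l N`: the object `N` is a retract of an object with a tower whose cells are the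
shifts of `M` listed in `l`. -/
def Built (M : C) (l : List ℤ) (N : C) : Prop :=
  ∃ A : C, Tower M l A ∧ Nonempty (Retract N A)

lemma Tower.built {M : C} {l : List ℤ} {A : C} (h : Tower M l A) : Built M l A :=
  ⟨A, h, ⟨Retract.refl A⟩⟩

lemma Built.of_retract {M : C} {l : List ℤ} {N P : C} (h : Built M l N) (r : Retract P N) :
    Built M l P := by
  obtain ⟨A, hA, ⟨s⟩⟩ := h
  exact ⟨A, hA, ⟨r.trans s⟩⟩

lemma Tower.single (M : C) : Tower M [0] M :=
  .cons _ (𝟙 M) 0 (contractible_distinguished₁ M)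
    ((shiftFunctorZero C ℤ).app M).symm (.zero (isZero_zero C))

lemma Tower.shift {M : C} {l : List ℤ} {A : C} (h : Tower M l A) (n : ℤ) :
    Tower M (l.map (· + n)) (A⟦n⟧) := by
  induction h with
  | zero hA => exact .zero ((shiftFunctor C n).map_isZero hA)
  | cons f g h hT e' _ ih =>
    exact .cons _ _ _ (Triangle.shift_distinguished _ hT n)
      ((shiftFunctor C n).mapIso e' ≪≫ ((shiftFunctorAdd C _ n).app M).symm) ih

lemma Built.shift {M : C} {l : List ℤ} {N : C} (h : Built M l N) (n : ℤ) :
    Built M (l.map (· + n)) (N⟦n⟧) := by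
  obtain ⟨A, hA, ⟨r⟩⟩ := h
  exact ⟨_, hA.shift n, ⟨r.map _⟩⟩

/-- The substitute for the octahedral axiom. Let `D ⟶ W ⟶ L ⟶ D⟦1⟧` be distinguished and let
`q : Q ⟶ L`, where `Q` has a tower over `M`. Attaching the cells of `Q` to `D` gives an object
`E` with a map to `W` such that the cofibre `W ⟶ C'` of `E ⟶ W` factors through some `κ : L ⟶ C'`
killing `q`. When `q` is a split epimorphism this makes `W ⟶ C'` zero, hence `W` a retract
of `E`. Only the factorization of the cofibre through `L` is carried along the induction; `κ` is
not required to be part of a morphism of triangles, and this leaves room for the correction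
of `w` below. -/
lemma attach {M Q : C} {l' : List ℤ} (hQ : Tower M l' Q) {l : List ℤ} {D W L : C}
    (a : D ⟶ W) (b : W ⟶ L) (c : L ⟶ D⟦(1 : ℤ)⟧) (hT : Triangle.mk a b c ∈ distTriang C)
    (hD : Tower M l D) (q : Q ⟶ L) :
    ∃ (E C' : C) (φ : E ⟶ W) (π : W ⟶ C') (δ : C' ⟶ E⟦(1 : ℤ)⟧) (κ : L ⟶ C'),
      Triangle.mk φ π δ ∈ distTriang C ∧ Tower M (l' ++ l) E ∧ b ≫ κ = π ∧ q ≫ κ = 0 := by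
  induction hQ with
  | zero hA =>
    exact ⟨D, L, a, b, c, 𝟙 L, hT, hD, by simp, by simpa using hA.eq_of_src _ _⟩
  | @cons l' A B Z k f g h hTQ e _ ih =>
    obtain ⟨E, C', φ, π, δ, κ, hφ, hE, hκ, hq⟩ := ih (f ≫ q)
    -- `q ≫ κ` vanishes on the previous stage, so it factors through the new cell `Z`.
    obtain ⟨v, hv⟩ : ∃ v : Z ⟶ C', q ≫ κ = g ≫ v :=
      Triangle.yoneda_exact₂ _ hTQ (q ≫ κ) ((Category.assoc f q κ).symm.trans hq)
    obtain ⟨E', i, p, hE'⟩ := distinguished_cocone_triangle₂ (v ≫ δ)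
    obtain ⟨φ', hφ₁, hφ₂⟩ : ∃ φ' : E' ⟶ W, i ≫ φ' = 𝟙 E ≫ φ ∧ p ≫ v = φ' ≫ π :=
      complete_distinguished_triangle_morphism₂ _ _ hE' hφ (𝟙 E) v (by
        change (v ≫ δ) ≫ (𝟙 E)⟦(1 : ℤ)⟧' = v ≫ δ
        simp)
    obtain ⟨C'', π', δ', hφ'⟩ := distinguished_cocone_triangle φ'
    obtain ⟨w, hw, -⟩ : ∃ w : C' ⟶ C'', π ≫ w = 𝟙 W ≫ π' ∧ δ ≫ i⟦(1 : ℤ)⟧' = w ≫ δ' :=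
      complete_distinguished_triangle_morphism _ _ hφ hφ' i (𝟙 W) (by
        change φ ≫ 𝟙 W = i ≫ φ'
        simp [hφ₁])
    rw [Category.id_comp] at hw
    have hφπ : φ' ≫ π' = 0 := comp_distTriang_mor_zero₁₂ _ hφ'
    have hπδ : π ≫ δ = 0 := comp_distTriang_mor_zero₂₃ _ hφ
    obtain ⟨ψ, hψ⟩ : ∃ ψ : E⟦(1 : ℤ)⟧ ⟶ C'', v ≫ w = (v ≫ δ) ≫ ψ :=
      Triangle.yoneda_exact₃ _ hE' (v ≫ w) (by
        change p ≫ v ≫ w = 0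
        rw [reassoc_of% hφ₂, hw, hφπ])
    -- Correcting `w` by `δ ≫ ψ` kills the new cell and does not affect `π ≫ w`.
    refine ⟨E', C'', φ', π', δ', κ ≫ (w - δ ≫ ψ), hφ', .cons i p _ hE' e hE, ?_, ?_⟩
    · rw [reassoc_of% hκ, Preadditive.comp_sub, hw, reassoc_of% hπδ, zero_comp, sub_zero]
    · rw [reassoc_of% hv, Preadditive.comp_sub, hψ, Category.assoc, sub_self, comp_zero]

/-- Building lists concatenate along extensions. -/
lemma Built.ext {M : C} {l l' : List ℤ} {D W L : C}
    (a : D ⟶ W) (b : W ⟶ L) (c : L ⟶ D⟦(1 : ℤ)⟧) (hT : Triangle.mk a b c ∈ distTriang C)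
    (hD : Built M l D) (hL : Built M l' L) : Built M (l' ++ l) W := by
  obtain ⟨D₀, hD₀, ⟨r⟩⟩ := hD
  obtain ⟨Q, hQ, ⟨s⟩⟩ := hL
  -- `W` is a retract of the extension `W₀` of `L` by `D₀` induced by `D ⟶ D₀`.
  obtain ⟨W₀, a₀, b₀, hT₀⟩ := distinguished_cocone_triangle₂ (c ≫ r.i⟦(1 : ℤ)⟧')
  have hr : r.i⟦(1 : ℤ)⟧' ≫ r.r⟦(1 : ℤ)⟧' = 𝟙 _ := by
    rw [← Functor.map_comp, r.retract, CategoryTheory.Functor.map_id]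
  obtain ⟨x, hx₁, hx₂⟩ : ∃ x : W ⟶ W₀, a ≫ x = r.i ≫ a₀ ∧ b ≫ 𝟙 L = x ≫ b₀ :=
    complete_distinguished_triangle_morphism₂ _ _ hT hT₀ r.i (𝟙 L)
      (Category.id_comp (c ≫ r.i⟦(1 : ℤ)⟧')).symm
  obtain ⟨y, hy₁, hy₂⟩ : ∃ y : W₀ ⟶ W, a₀ ≫ y = r.r ≫ a ∧ b₀ ≫ 𝟙 L = y ≫ b :=
    complete_distinguished_triangle_morphism₂ _ _ hT₀ hT r.r (𝟙 L) (by
      change (c ≫ r.i⟦(1 : ℤ)⟧') ≫ r.r⟦(1 : ℤ)⟧' = 𝟙 L ≫ c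
      simp [hr])
  let θ : Triangle.mk a b c ⟶ Triangle.mk a b c :=
    { hom₁ := 𝟙 D
      hom₂ := x ≫ y
      hom₃ := 𝟙 L
      comm₁ := by
        change a ≫ x ≫ y = 𝟙 D ≫ a
        rw [reassoc_of% hx₁, hy₁, reassoc_of% r.retract, Category.id_comp]
      comm₂ := by
        change b ≫ 𝟙 L = (x ≫ y) ≫ b
        rw [Category.assoc, ← hy₂, hx₂, Category.comp_id]
      comm₃ := by
        change c ≫ (𝟙 D)⟦(1 : ℤ)⟧' = 𝟙 L ≫ c
        simp }
  have hθ : IsIso (x ≫ y) := isIso₂_of_isIso₁₃ θ hT hT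
    (inferInstanceAs (IsIso (𝟙 D))) (inferInstanceAs (IsIso (𝟙 L)))
  have rW : Retract W W₀ := ⟨x, y ≫ inv (x ≫ y), by
    rw [← Category.assoc, IsIso.hom_inv_id]⟩
  obtain ⟨E, C', φ, π, δ, κ, hφ, hE, hκ, hq⟩ := attach hQ a₀ b₀ _ hT₀ hD₀ s.r
  have hκ0 : κ = 0 := by
    rw [← Category.id_comp κ, ← s.retract, Category.assoc, hq, comp_zero]
  obtain ⟨j, hj⟩ : ∃ j : W₀ ⟶ E, 𝟙 W₀ = j ≫ φ :=
    Triangle.coyoneda_exact₂ _ hφ (𝟙 W₀) (by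
      change 𝟙 W₀ ≫ π = 0
      rw [← hκ, hκ0, comp_zero, comp_zero])
  exact hE.built.of_retract (rW.trans ⟨j, φ, hj.symm⟩)

/-- Each cell `N⟦n⟧` is replaced by the cells building `N` from `M`, shifted by `n`. -/
lemma Built.trans {M N P : C} {l l' : List ℤ} (hN : Built M l N) (hP : Built N l' P) :
    Built M (l'.flatMap fun n => l.map (· + n)) P := by
  obtain ⟨A, hA, ⟨r⟩⟩ := hP
  refine Built.of_retract ?_ r
  clear r P
  induction hA with
  | zero hA => exact (Tower.zero hA).built
  | cons f g h hT e _ ih =>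
    exact Built.ext f g h hT ih ((hN.shift _).of_retract (Retract.ofIso e))

lemma exists_built {M N : C} (hN : N ∈ thickClosure C M) : ∃ l, Built M l N := by
  refine hN {X | ∃ l, Built M l X} ⟨⟨?_, ?_, ?_, ?_⟩, ⟨[0], (Tower.single M).built⟩⟩
  · rintro X Y e ⟨l, h⟩
    exact ⟨l, h.of_retract (Retract.ofIso e.symm)⟩
  · rintro X n ⟨l, h⟩
    exact ⟨_, h.shift n⟩
  · rintro T hT ⟨l, h⟩ ⟨l', h'⟩
    exact ⟨_, Built.ext _ _ _ (rot_of_distTriang _ hT) h' (h.shift 1)⟩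
  · rintro X Y ⟨l, h⟩
    exact ⟨l, h.of_retract ⟨biprod.inl, biprod.fst, by simp⟩⟩

/-! ### Comparison with the complexity -/

/-- In a pretriangulated category a retract is a direct summand. -/
lemma exists_iso_biprod {X Y : C} (r : Retract X Y) : ∃ X' : C, Nonempty (Y ≅ X ⊞ X') := by
  obtain ⟨Z, g, h, hT⟩ := distinguished_cocone_triangle r.i
  have : Mono r.i := ⟨fun u v huv => by
    rw [← Category.comp_id u, ← Category.comp_id v, ← r.retract, reassoc_of% huv]⟩
  have h0 : h = 0 := Triangle.mor₃_eq_zero_of_mono₁ _ hT this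
  obtain ⟨e, -, -⟩ := exists_iso_binaryBiproduct_of_distTriang _ hT h0
  exact ⟨Z, ⟨e⟩⟩

/-- The cost `∑ exp (k t)` of a list of cells. -/
noncomputable def cost (t : ℝ) (l : List ℤ) : ℝ≥0∞ :=
  (l.map fun k : ℤ => ENNReal.ofReal (Real.exp ((k : ℝ) * t))).sum

lemma cost_ne_top (t : ℝ) (l : List ℤ) : cost t l ≠ ⊤ := by
  induction l with
  | nil => simp [cost]
  | cons k l ih => simpa [cost] using ih

lemma cost_shift (t : ℝ) (l : List ℤ) (n : ℤ) :
    cost t (l.map (· + n)) = ENNReal.ofReal (Real.exp ((n : ℝ) * t)) * cost t l := by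
  induction l with
  | nil => simp [cost]
  | cons k l ih =>
    simp only [cost, List.map_cons, List.sum_cons, mul_add] at ih ⊢
    rw [ih, ← ENNReal.ofReal_mul (Real.exp_pos _).le, ← Real.exp_add]
    congr 3
    push_cast
    ring

lemma cost_flatMap (t : ℝ) (l l' : List ℤ) :
    cost t (l'.flatMap fun n => l.map (· + n)) = cost t l' * cost t l := by
  induction l' with
  | nil => simp [cost]
  | cons k l' ih =>
    rw [List.flatMap_cons]
    have happ : ∀ a b : List ℤ, cost t (a ++ b) = cost t a + cost t b := by
      intro a b; simp [cost]
    rw [happ, cost_shift, ih, ← add_mul]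
    simp [cost]

/-- The chain of objects in the definition of the complexity, extracted from a tower. -/
lemma Tower.exists_chain {M : C} {l : List ℤ} {B : C} (h : Tower M l B) (t : ℝ) :
    ∃ (n : Fin l.length → ℤ) (A : Fin (l.length + 1) → C),
      IsZero (A 0) ∧ A (Fin.last _) = B ∧
      (∀ i : Fin l.length,
        ∃ (f : A i.castSucc ⟶ A i.succ) (g : A i.succ ⟶ M⟦n i⟧)
          (h : M⟦n i⟧ ⟶ (A i.castSucc)⟦(1 : ℤ)⟧), Triangle.mk f g h ∈ (distTriang C)) ∧
      cost t l = ∑ i, ENNReal.ofReal (Real.exp ((n i : ℝ) * t)) := by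
  induction h with
  | @zero A hA => exact ⟨Fin.elim0, fun _ => A, hA, rfl, fun i => i.elim0, by simp [cost]⟩
  | @cons l A B Z k f g h hT e _ ih =>
    obtain ⟨n, A', h0, hlast, htri, hc⟩ := ih
    refine ⟨Fin.snoc (α := fun _ => ℤ) n k, Fin.snoc (α := fun _ => C) A' B, ?_, ?_, ?_, ?_⟩
    · rw [← Fin.castSucc_zero, Fin.snoc_castSucc (α := fun _ => C)]
      exact h0
    · exact Fin.snoc_last (α := fun _ => C) _ _
    · intro i
      refine Fin.lastCases ?_ (fun j => ?_) i
      · have e1 : Fin.snoc (α := fun _ => C) A' B (Fin.last l.length).castSucc = A :=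
          (Fin.snoc_castSucc (α := fun _ => C) _ _ _).trans hlast
        have e2 : Fin.snoc (α := fun _ => C) A' B (Fin.last l.length).succ = B :=
          Fin.snoc_last (α := fun _ => C) _ _
        have e3 : Fin.snoc (α := fun _ => ℤ) n k (Fin.last l.length) = k :=
          Fin.snoc_last (α := fun _ => ℤ) _ _
        rw [e1, e2, e3]
        refine ⟨f, g ≫ e.hom, e.inv ≫ h, isomorphic_distinguished _ hT _
          (Triangle.isoMk _ _ (Iso.refl _) (Iso.refl _) e.symm
            (show f ≫ 𝟙 B = 𝟙 A ≫ f by simp) (show (g ≫ e.hom) ≫ e.inv = 𝟙 B ≫ g by simp)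
            (show (e.inv ≫ h) ≫ (𝟙 A)⟦(1 : ℤ)⟧' = e.inv ≫ h by simp))⟩
      · have e1 : Fin.snoc (α := fun _ => C) A' B j.castSucc.castSucc = A' j.castSucc :=
          Fin.snoc_castSucc (α := fun _ => C) _ _ _
        have e2 : Fin.snoc (α := fun _ => C) A' B j.castSucc.succ = A' j.succ := by
          rw [Fin.succ_castSucc]
          exact Fin.snoc_castSucc (α := fun _ => C) _ _ _
        have e3 : Fin.snoc (α := fun _ => ℤ) n k j.castSucc = n j :=
          Fin.snoc_castSucc (α := fun _ => ℤ) _ _ _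
        rw [e1, e2, e3]
        exact htri j
    · simp only [List.length_cons]
      rw [Fin.sum_univ_castSucc]
      simp only [Fin.snoc_castSucc, Fin.snoc_last]
      rw [← hc, add_comm]
      simp [cost]

/-- The converse of `Tower.exists_chain`. -/
lemma exists_tower_of_chain {M : C} (t : ℝ) (p : ℕ) (n : Fin p → ℤ) (A : Fin (p + 1) → C)
    (h0 : IsZero (A 0))
    (htri : ∀ i : Fin p,
        ∃ (f : A i.castSucc ⟶ A i.succ) (g : A i.succ ⟶ M⟦n i⟧)
          (h : M⟦n i⟧ ⟶ (A i.castSucc)⟦(1 : ℤ)⟧), Triangle.mk f g h ∈ (distTriang C)) :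
    ∃ l : List ℤ, Tower M l (A (Fin.last p)) ∧
      cost t l = ∑ i, ENNReal.ofReal (Real.exp ((n i : ℝ) * t)) := by
  induction p with
  | zero => exact ⟨[], .zero h0, by simp [cost]⟩
  | succ p ih =>
    obtain ⟨l, hl, hc⟩ := ih (fun i => n i.castSucc) (fun i => A i.castSucc) h0
      (fun i => htri i.castSucc)
    obtain ⟨f, g, h, hT⟩ := htri (Fin.last p)
    refine ⟨n (Fin.last p) :: l, .cons f g h hT (Iso.refl _) hl, ?_⟩
    rw [Fin.sum_univ_castSucc, ← hc, add_comm]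
    simp [cost]

lemma complexity_le_cost {M N : C} (t : ℝ) (hN : N ∈ thickClosure C M) (hN0 : ¬ IsZero N)
    {l : List ℤ} (h : Built M l N) : complexity C t M N ≤ cost t l := by
  obtain ⟨B, hB, ⟨r⟩⟩ := h
  have hl : 0 < l.length := by
    cases hB with
    | zero hA => exact absurd (isZero_of_retract r hA) hN0
    | cons => simp
  obtain ⟨n, A, h0, hlast, htri, hc⟩ := hB.exists_chain t
  obtain ⟨N', he⟩ := exists_iso_biprod r
  rw [complexity, if_neg hN0, if_pos hN]
  exact sInf_le ⟨l.length, hl, n, A, N', h0, hlast ▸ he, htri, hc⟩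

lemma le_complexity_s14 {M N : C} (t : ℝ) (hN0 : ¬ IsZero N) {x : ℝ≥0∞}
    (h : ∀ l, Built M l N → x ≤ cost t l) : x ≤ complexity C t M N := by
  rw [complexity, if_neg hN0]
  split_ifs with hN
  · refine le_sInf ?_
    rintro c ⟨p, -, n, A, N', h0, ⟨e⟩, htri, rfl⟩
    obtain ⟨l, hl, hc⟩ := exists_tower_of_chain t p n A h0 htri
    rw [← hc]
    exact h l ⟨_, hl, ⟨biprod.inl ≫ e.inv, e.hom ≫ biprod.fst, by simp⟩⟩
  · exact le_top

end Towers

/-! ### Triangulated functors -/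

section Functors

variable {C : Type u} [Category.{v} C] [Preadditive C] [HasZeroObject C]
  [HasShift C ℤ] [∀ n : ℤ, (shiftFunctor C n).Additive] [Pretriangulated C]
  {D : Type u₂} [Category.{v₂} D] [Preadditive D] [HasZeroObject D]
  [HasShift D ℤ] [∀ n : ℤ, (shiftFunctor D n).Additive] [Pretriangulated D]

lemma Built.map {M N : C} {l : List ℤ} (h : Built M l N) (F : C ⥤ D) [F.Additive]
    [F.CommShift ℤ] [F.IsTriangulated] : Built (F.obj M) l (F.obj N) := by
  obtain ⟨A, hA, ⟨r⟩⟩ := h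
  refine Built.of_retract (Tower.built ?_) (r.map F)
  clear r N
  induction hA with
  | zero hA => exact .zero (F.map_isZero hA)
  | cons f g h hT e _ ih =>
    exact .cons _ _ _ (F.map_distinguished _ hT)
      (F.mapIso e ≪≫ (F.commShiftIso _).app M) ih

lemma Built.iter {M N : C} {l : List ℤ} (h : Built M l N) (F : C ⥤ C) [F.Additive]
    [F.CommShift ℤ] [F.IsTriangulated] (m : ℕ) :
    Built ((iter C F m).obj M) l ((CatEntropy.iter C F m).obj N) := by
  induction m with
  | zero => exact h
  | succ m ih => exact ih.map F

end Functors

lemma iter_comm {C : Type u} [Category.{v} C] {D : Type u₂} [Category.{v₂} D]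
    {F₁ : C ⥤ C} {F₂ : D ⥤ D} {F' : C ⥤ D}
    (e : (F₁ ⋙ F') ≅ (F' ⋙ F₂))
    {X : C} {Y : D} (i : F'.obj X ≅ Y) (m : ℕ) :
    Nonempty ((iter D F₂ m).obj Y ≅ F'.obj ((iter C F₁ m).obj X)) := by
  induction m with
  | zero => exact ⟨i.symm⟩
  | succ m ih =>
    obtain ⟨j⟩ := ih
    exact ⟨F₂.mapIso j ≪≫ (e.app ((iter C F₁ m).obj X)).symm⟩

/-! ### Growth rates -/

/-- A constant factor does not affect exponential growth rates. -/
lemma limsup_le_of_le_mul {a b : ℕ → ℝ≥0∞} {K : ℝ≥0∞} (hK : K ≠ ⊤)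
    (h : ∀ m, a m ≤ K * b m) :
    (atTop.limsup fun m : ℕ => (((m : ℝ)⁻¹ : ℝ) : EReal) * (a m).log) ≤
      atTop.limsup fun m : ℕ => (((m : ℝ)⁻¹ : ℝ) : EReal) * (b m).log := by
  -- `K + 1` is positive and finite, so its logarithm is a real number.
  have hr : ∃ r : ℝ, (K + 1).log = (r : EReal) := by
    refine ⟨(K + 1).log.toReal, (EReal.coe_toReal ?_ ?_).symm⟩
    · rw [Ne, ENNReal.log_eq_top_iff]
      simpa using hK
    · rw [Ne, ENNReal.log_eq_bot_iff]
      simp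
  obtain ⟨r, hr⟩ := hr
  have hlim : Tendsto (fun m : ℕ => (((m : ℝ)⁻¹ : ℝ) : EReal) * (r : EReal)) atTop
      (nhds (0 : EReal)) := by
    have h1 : Tendsto (fun m : ℕ => (m : ℝ)⁻¹ * r) atTop (nhds 0) := by
      simpa using (tendsto_inv_atTop_nhds_zero_nat (𝕜 := ℝ)).mul_const r
    have h2 := (continuous_coe_real_ereal.tendsto (0 : ℝ)).comp h1
    simpa [Function.comp_def] using h2
  have h0 := hlim.limsup_eq
  calc _ ≤ atTop.limsup ((fun m : ℕ => (((m : ℝ)⁻¹ : ℝ) : EReal) * (r : EReal)) +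
          fun m : ℕ => (((m : ℝ)⁻¹ : ℝ) : EReal) * (b m).log) := by
        refine limsup_le_limsup (Eventually.of_forall fun m => ?_)
        have hm : (0 : EReal) ≤ (((m : ℝ)⁻¹ : ℝ) : EReal) := by
          exact_mod_cast inv_nonneg.mpr (Nat.cast_nonneg m)
        simp only [Pi.add_apply]
        rw [← EReal.left_distrib_of_nonneg_of_ne_top hm (EReal.coe_ne_top _), ← hr,
          ← ENNReal.log_mul_add]
        refine mul_le_mul_of_nonneg_left (ENNReal.log_monotone ((h m).trans ?_)) hm
        gcongr
        exact le_self_add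
    _ ≤ _ := EReal.limsup_add_le (by simp [h0]) (by simp [h0])
    _ = _ := by rw [h0, zero_add]

/-- If an essentially surjective triangulated functor `F' : T₁ ⥤ T₂`
intertwines `F₁` and `F₂`, then `h_t(F₂) ≤ h_t(F₁)`. -/
theorem statement_14 {C₁ : Type u} [Category.{v} C₁] [Preadditive C₁] [HasZeroObject C₁]
    [HasShift C₁ ℤ] [∀ n : ℤ, (shiftFunctor C₁ n).Additive] [Pretriangulated C₁] [Linear ℂ C₁]
    {C₂ : Type u₂} [Category.{v₂} C₂] [Preadditive C₂] [HasZeroObject C₂]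
    [HasShift C₂ ℤ] [∀ n : ℤ, (shiftFunctor C₂ n).Additive] [Pretriangulated C₂] [Linear ℂ C₂]
    (hC₁ : ∃ X : C₁, ¬ IsZero X) (hC₂ : ∃ X : C₂, ¬ IsZero X)
    (hft₁ : IsFiniteType C₁) (hft₂ : IsFiniteType C₂)
    (G₁ : C₁) (hG₁ : IsSplitGenerator C₁ G₁) (G₂ : C₂) (hG₂ : IsSplitGenerator C₂ G₂)
    (F₁ : C₁ ⥤ C₁) [F₁.Additive] [F₁.Linear ℂ] [F₁.CommShift ℤ] [F₁.IsTriangulated]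
    (F₂ : C₂ ⥤ C₂) [F₂.Additive] [F₂.Linear ℂ] [F₂.CommShift ℤ] [F₂.IsTriangulated]
    (h₁ : ∀ n : ℕ, ¬ IsZero ((iter C₁ F₁ n).obj G₁))
    (h₂ : ∀ n : ℕ, ¬ IsZero ((iter C₂ F₂ n).obj G₂))
    (F' : C₁ ⥤ C₂) [F'.Additive] [F'.Linear ℂ] [F'.CommShift ℤ] [F'.IsTriangulated]
    [F'.EssSurj]
    (hcomm : Nonempty ((F₁ ⋙ F') ≅ (F' ⋙ F₂))) (t : ℝ) :
    entropy C₂ F₂ G₂ t ≤ entropy C₁ F₁ G₁ t := by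
  obtain ⟨e⟩ := hcomm
  let X := F'.objPreimage G₂
  let i : F'.obj X ≅ G₂ := F'.objObjPreimageIso G₂
  obtain ⟨l₀, hX⟩ := exists_built (hG₁ X)
  obtain ⟨l₁, hG⟩ := exists_built (hG₂ (F'.obj G₁))
  let K := cost t l₀ * cost t l₁ + 1
  -- The summand `1` makes `K` nonzero, so that it can be divided by.
  have hK : K ≠ ⊤ := by
    simp [K, ENNReal.mul_ne_top (cost_ne_top t l₀) (cost_ne_top t l₁)]
  have hK0 : K ≠ 0 := by simp [K]
  refine limsup_le_of_le_mul hK fun m => ?_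
  rw [mul_comm, ← ENNReal.div_le_iff_le_mul (.inl hK0) (.inl hK)]
  refine le_complexity_s14 t (h₁ m) fun l hl => ?_
  rw [ENNReal.div_le_iff_le_mul (.inl hK0) (.inl hK)]
  obtain ⟨j⟩ := iter_comm e i m
  have hb := hG.trans (((hl.trans (hX.iter F₁ m)).map F').of_retract (Retract.ofIso j))
  refine (complexity_le_cost t (hG₂ _) (h₂ m) hb).trans ?_
  rw [cost_flatMap, cost_flatMap]
  calc cost t l₀ * cost t l * cost t l₁ = cost t l * (cost t l₀ * cost t l₁) := by ring
    _ ≤ cost t l * K := by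
      gcongr
      exact le_self_add

end CatEntropy
end

section
/- Every matrix A ∈ SL(2, ℤ) with tr(A) > 2 is conjugate in SL(2, ℤ) to a matrix of the form [[1, m_{2n−1}],[m_{2n}, 1 + m_{2n−1} m_{2n}]] · ⋯ · [[1, m₁],[m₂, 1 + m₁ m₂]] for some n ≥ 1 and some positive integers m₁, …, m_{2n}; equivalently, A is conjugate in SL(2, ℤ) to a product L^{m_{2n}} R^{m_{2n−1}} ⋯ L^{m₂} R^{m₁}, where R = [[1,1],[0,1]] and L = [[1,0],[1,1]]. -/
/-!
Write `A = [[a, b], [c, d]]`. Since `tr A > 2`, the product `b c` is nonzero and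
`(a - d)² + 4 b c = (tr A)² - 4 > 0`. If `b c < 0`, this forces `|b| < |a - d|` or `|c| < |a - d|`,
so conjugating by `L^{±1}` or `R^{±1}`, which changes `a - d` by `± 2 b` or `± 2 c`, makes
`|a - d|` smaller. This descent ends at a conjugate with `b c > 0`, and then (after conjugating by
the rotation `S` if `b, c < 0`) all entries are positive: `exists_isConj_nonneg`.

A matrix of determinant one with nonnegative entries is a product of `L`s and `R`s by the
Euclidean algorithm on its rows: one row dominates the other, so an `R` or an `L` splits off on the
left. Grouping equal letters gives `A = R^x E L^y` with `E` a product of blocks `L^n R^m`,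
`m, n > 0`: `nonneg_factor`. Cyclic conjugation absorbs `R^x` and `L^y` into the blocks; some block
exists because `R^x` and `L^y` alone have trace `2`.
-/


namespace SL2Conj

/-- `SL(2, ℤ)`. -/
abbrev SL2Z := Matrix.SpecialLinearGroup (Fin 2) ℤ

/-- The elementary factor `[[1, x], [y, 1 + x y]] = L^y R^x` in `SL(2, ℤ)`. -/
def elemFactor (x y : ℤ) : SL2Z :=
  ⟨!![1, x; y, 1 + x * y], by rw [Matrix.det_fin_two_of]; ring⟩

/-- `L = [[1, 0], [1, 1]]`. -/
def Lmat : SL2Z := elemFactor 0 1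

/-- `R = [[1, 1], [0, 1]]`. -/
def Rmat : SL2Z := elemFactor 1 0

/-- The element of `SL(2, ℤ)` with given entries. -/
def mk (a b c d : ℤ) (h : a * d - b * c = 1) : SL2Z :=
  ⟨!![a, b; c, d], by rw [Matrix.det_fin_two_of]; exact h⟩

lemma exists_eq_mk (A : SL2Z) : ∃ a b c d h, A = mk a b c d h := by
  refine ⟨A 0 0, A 0 1, A 1 0, A 1 1, ?_, ?_⟩
  · have := A.det_coe
    rwa [Matrix.det_fin_two] at this
  · ext i j
    fin_cases i <;> fin_cases j <;> rfl

lemma elemFactor_eq_mk (x y : ℤ) : elemFactor x y = mk 1 x y (1 + x * y) (by ring) := rfl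

lemma mk_mul (a b c d h a' b' c' d' h') :
    mk a b c d h * mk a' b' c' d' h' =
      mk (a * a' + b * c') (a * b' + b * d') (c * a' + d * c') (c * b' + d * d')
        (by linear_combination (a' * d' - b' * c') * h + h') := by
  apply Subtype.ext
  rw [Matrix.SpecialLinearGroup.coe_mul]
  exact Matrix.mul_fin_two ..

lemma mk_congr {a b c d a' b' c' d' : ℤ} {h h'} (ha : a = a') (hb : b = b') (hc : c = c')
    (hd : d = d') : mk a b c d h = mk a' b' c' d' h' := by
  subst ha hb hc hd; rfl

lemma trace_mk (a b c d h) : Matrix.trace (mk a b c d h : Matrix (Fin 2) (Fin 2) ℤ) = a + d := by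
  simp [mk, Matrix.trace_fin_two]

lemma isConj_of_mul_eq {A B P : SL2Z} (h : P * A = B * P) : IsConj A B :=
  isConj_iff.2 ⟨P, by rw [h, mul_inv_cancel_right]⟩

lemma isConj_upper (k a b c d h) :
    IsConj (mk a b c d h) (mk (a + k * c) (b + k * (d - a) - k ^ 2 * c) c (d - k * c)
      (by linear_combination h)) := by
  apply isConj_of_mul_eq (P := mk 1 k 0 1 (by ring))
  rw [mk_mul, mk_mul]
  apply mk_congr <;> ring

lemma isConj_lower (k a b c d h) :
    IsConj (mk a b c d h) (mk (a - k * b) b (c + k * (a - d) - k ^ 2 * b) (d + k * b)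
      (by linear_combination h)) := by
  apply isConj_of_mul_eq (P := mk 1 0 k 1 (by ring))
  rw [mk_mul, mk_mul]
  apply mk_congr <;> ring

lemma isConj_rotate (a b c d h) :
    IsConj (mk a b c d h) (mk d (-c) (-b) a (by linear_combination h)) := by
  apply isConj_of_mul_eq (P := mk 0 (-1) 1 0 (by ring))
  rw [mk_mul, mk_mul]
  apply mk_congr <;> ring

/-- One of the two shifts `u ± 2 v` is smaller than `u` when `0 < |v| < |u|`. -/
lemma exists_shift {u v : ℤ} (hv : v ≠ 0) (h : |v| < |u|) :
    ∃ k : ℤ, (u + 2 * (k * v)).natAbs < u.natAbs := by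
  by_cases huv : 0 ≤ u * v
  · refine ⟨-1, ?_⟩
    rcases lt_or_gt_of_ne hv with hv | hv
    · have : u ≤ 0 := by nlinarith
      grind
    · have : 0 ≤ u := by nlinarith
      grind
  · refine ⟨1, ?_⟩
    rcases lt_or_gt_of_ne hv with hv | hv
    · have : 0 ≤ u := by nlinarith
      grind
    · have : u ≤ 0 := by nlinarith
      grind

/-- Descent on `|a - d|`. -/
lemma exists_isConj_nonneg (N : ℕ) : ∀ (a b c d : ℤ) (h : a * d - b * c = 1), 2 < a + d →
    (a - d).natAbs = N → ∃ a' b' c' d' h', a' + d' = a + d ∧ 0 ≤ a' ∧ 0 ≤ b' ∧ 0 ≤ c' ∧ 0 ≤ d' ∧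
      IsConj (mk a b c d h) (mk a' b' c' d' h') := by
  induction N using Nat.strong_induction_on with
  | _ N ih =>
  intro a b c d h ht hN
  have hb : b ≠ 0 := by
    rintro rfl
    rcases Int.mul_eq_one_iff_eq_one_or_neg_one.1 (show a * d = 1 by linarith) with
      ⟨rfl, rfl⟩ | ⟨rfl, rfl⟩ <;> linarith
  have hc : c ≠ 0 := by
    rintro rfl
    rcases Int.mul_eq_one_iff_eq_one_or_neg_one.1 (show a * d = 1 by linarith) with
      ⟨rfl, rfl⟩ | ⟨rfl, rfl⟩ <;> linarith
  by_cases hbc : 0 < b * c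
  · have had : 0 < a * d := by linarith
    have ha : 0 < a := by
      by_contra hcon
      nlinarith
    have hd : 0 < d := by
      by_contra hcon
      nlinarith
    rcases lt_or_gt_of_ne hb with hb' | hb'
    · have hc' : c < 0 := by nlinarith
      exact ⟨d, -c, -b, a, _, by ring, hd.le, by linarith, by linarith, ha.le,
        isConj_rotate a b c d h⟩
    · have hc' : 0 < c := by nlinarith
      exact ⟨a, b, c, d, h, rfl, ha.le, hb'.le, hc'.le, hd.le, IsConj.refl _⟩
  · have hneg : b * c < 0 := lt_of_le_of_ne (not_lt.1 hbc) (mul_ne_zero hb hc)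
    have hdisc : 0 < (a - d) ^ 2 + 4 * (b * c) := by nlinarith
    have hor : |c| < |a - d| ∨ |b| < |a - d| := by
      by_contra! hcon
      have h1 : |a - d| * |a - d| ≤ |b| * |c| :=
        mul_le_mul hcon.2 hcon.1 (abs_nonneg _) (abs_nonneg _)
      rw [abs_mul_abs_self, ← abs_mul, abs_of_neg hneg] at h1
      nlinarith
    rcases hor with hlt | hlt
    · obtain ⟨k, hk⟩ := exists_shift hc hlt
      obtain ⟨a', b', c', d', h', htr, h1, h2, h3, h4, hconj⟩ :=
        ih _ (hN ▸ hk) (a + k * c) (b + k * (d - a) - k ^ 2 * c) c (d - k * c)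
          (by linear_combination h) (by linarith) (by congr 1; ring)
      exact ⟨a', b', c', d', h', by linarith, h1, h2, h3, h4,
        (isConj_upper k a b c d h).trans hconj⟩
    · obtain ⟨k, hk⟩ := exists_shift (neg_ne_zero.2 hb) ((abs_neg b).symm ▸ hlt)
      obtain ⟨a', b', c', d', h', htr, h1, h2, h3, h4, hconj⟩ :=
        ih _ (hN ▸ hk) (a - k * b) b (c + k * (a - d) - k ^ 2 * b) (d + k * b)
          (by linear_combination h) (by linarith) (by congr 1; ring)
      exact ⟨a', b', c', d', h', by linarith, h1, h2, h3, h4,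
        (isConj_lower k a b c d h).trans hconj⟩

/-- The product of the blocks `L^y R^x` over a list of exponent pairs `(x, y)`. -/
def blockProd (l : List (ℤ × ℤ)) : SL2Z := (l.map fun p => elemFactor p.1 p.2).prod

/-- All exponents occurring in the list are positive. -/
def AllPos (l : List (ℤ × ℤ)) : Prop := ∀ p ∈ l, 0 < p.1 ∧ 0 < p.2

lemma blockProd_nil : blockProd [] = 1 := rfl

lemma blockProd_cons (p l) : blockProd (p :: l) = elemFactor p.1 p.2 * blockProd l := by
  simp [blockProd]

lemma blockProd_concat (l p) : blockProd (l ++ [p]) = blockProd l * elemFactor p.1 p.2 := by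
  simp [blockProd]

lemma elemFactor_zero : elemFactor 0 0 = 1 := by
  ext i j
  fin_cases i <;> fin_cases j <;> rfl

lemma lower_mul_upper (x y : ℤ) : elemFactor 0 y * elemFactor x 0 = elemFactor x y := by
  simp only [elemFactor_eq_mk, mk_mul]
  apply mk_congr <;> ring

lemma lower_mul_elemFactor (x y z : ℤ) :
    elemFactor 0 z * elemFactor x y = elemFactor x (z + y) := by
  simp only [elemFactor_eq_mk, mk_mul]
  apply mk_congr <;> ring

lemma elemFactor_mul_upper (x y z : ℤ) :
    elemFactor x y * elemFactor z 0 = elemFactor (x + z) y := by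
  simp only [elemFactor_eq_mk, mk_mul]
  apply mk_congr <;> ring

lemma AllPos.cons {p l} (h1 : 0 < p.1) (h2 : 0 < p.2) (h : AllPos l) : AllPos (p :: l) := by
  intro q hq
  rcases List.mem_cons.1 hq with rfl | hq
  exacts [⟨h1, h2⟩, h q hq]

/-- One row of a nonnegative matrix of determinant one dominates the other, unless the matrix is
the identity. -/
lemma row_cases {a b c d : ℤ} (h : a * d - b * c = 1) (ha : 0 ≤ a) (hb : 0 ≤ b) (hc : 0 ≤ c)
    (hd : 0 ≤ d) : (a = 1 ∧ b = 0 ∧ c = 0 ∧ d = 1) ∨ (c ≤ a ∧ d ≤ b) ∨ (a ≤ c ∧ b ≤ d) := by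
  by_cases hac : c ≤ a
  · by_cases hdb : d ≤ b
    · exact Or.inr (Or.inl ⟨hac, hdb⟩)
    · rcases hac.eq_or_lt with rfl | hlt
      · exact Or.inr (Or.inr ⟨le_rfl, by linarith⟩)
      · -- `c + 1 ≤ a` and `b + 1 ≤ d` give `1 = a d - b c ≥ b + c + 1`.
        have hprod : (c + 1) * (b + 1) ≤ a * d :=
          mul_le_mul (by linarith) (by linarith) (by linarith) ha
        have hb0 : b = 0 := by nlinarith
        have hc0 : c = 0 := by nlinarith
        subst hb0 hc0
        have had : a * d = 1 := by linarith
        left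
        refine ⟨?_, rfl, rfl, ?_⟩ <;> nlinarith
  · refine Or.inr (Or.inr ⟨by linarith, ?_⟩)
    by_contra hcon
    nlinarith [mul_le_mul (show a ≤ c by linarith) (show d ≤ b by linarith) hd hc]

lemma nonneg_factor (N : ℕ) : ∀ (a b c d : ℤ) (h : a * d - b * c = 1), 0 ≤ a → 0 ≤ b → 0 ≤ c →
    0 ≤ d → (a + b + c + d).toNat = N → ∃ x y : ℤ, ∃ l, 0 ≤ x ∧ 0 ≤ y ∧ AllPos l ∧
      mk a b c d h = elemFactor x 0 * blockProd l * elemFactor 0 y := by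
  induction N using Nat.strong_induction_on with
  | _ N ih =>
  intro a b c d h ha hb hc hd hN
  rcases row_cases h ha hb hc hd with ⟨rfl, rfl, rfl, rfl⟩ | ⟨h1, h2⟩ | ⟨h1, h2⟩
  · refine ⟨0, 0, [], le_rfl, le_rfl, by simp [AllPos], ?_⟩
    simp only [elemFactor_zero, blockProd_nil, mul_one]
    exact elemFactor_zero
  · -- The second row is nonzero, so subtracting it lowers the entry sum.
    have hpos : 0 < c + d := by
      by_contra hcon
      have hc0 : c = 0 := by linarith
      have hd0 : d = 0 := by linarith
      subst hc0 hd0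
      simp at h
    obtain ⟨x, y, l, hx, hy, hl, he⟩ := ih (a - c + (b - d) + c + d).toNat (by omega)
      (a - c) (b - d) c d (by linear_combination h) (by linarith) (by linarith) hc hd rfl
    refine ⟨1 + x, y, l, by linarith, hy, hl, ?_⟩
    rw [← elemFactor_mul_upper, mul_assoc, mul_assoc, ← mul_assoc (elemFactor x 0), ← he,
      elemFactor_eq_mk, mk_mul]
    apply mk_congr <;> ring
  · have hpos : 0 < a + b := by
      by_contra hcon
      have ha0 : a = 0 := by linarith
      have hb0 : b = 0 := by linarith
      subst ha0 hb0
      simp at h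
    obtain ⟨x, y, l, hx, hy, hl, he⟩ := ih (a + b + (c - a) + (d - b)).toNat (by omega)
      a b (c - a) (d - b) (by linear_combination h) ha hb (by linarith) (by linarith) rfl
    have hA : mk a b c d h = elemFactor 0 1 * elemFactor x 0 * blockProd l * elemFactor 0 y := by
      rw [mul_assoc, mul_assoc, ← mul_assoc (elemFactor x 0), ← he, elemFactor_eq_mk, mk_mul]
      apply mk_congr <;> ring
    rcases hx.eq_or_lt with rfl | hx
    · rw [elemFactor_zero, mul_one] at hA
      rcases l with _ | ⟨p, l⟩
      · refine ⟨0, 1 + y, [], le_rfl, by linarith, hl, ?_⟩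
        rw [hA, elemFactor_zero, blockProd_nil, one_mul, one_mul, mul_one, lower_mul_elemFactor]
      · have hp := hl p (by simp)
        refine ⟨0, y, (p.1, 1 + p.2) :: l, le_rfl, hy,
          AllPos.cons hp.1 (by linarith [hp.2]) fun q hq => hl q (by simp [hq]), ?_⟩
        rw [hA, elemFactor_zero, one_mul, blockProd_cons, blockProd_cons, ← mul_assoc,
          lower_mul_elemFactor]
    · refine ⟨0, y, (x, 1) :: l, le_rfl, hy, AllPos.cons hx one_pos hl, ?_⟩
      rw [hA, elemFactor_zero, one_mul, blockProd_cons, lower_mul_upper]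

/-- Cyclic conjugation turns `R^x E L^y` into a nonempty product of positive blocks. -/
lemma exists_isConj_blockProd {A : SL2Z}
    (hA : 2 < Matrix.trace (A : Matrix (Fin 2) (Fin 2) ℤ)) :
    ∃ l, l ≠ [] ∧ AllPos l ∧ IsConj A (blockProd l) := by
  obtain ⟨a, b, c, d, h, rfl⟩ := exists_eq_mk A
  rw [trace_mk] at hA
  obtain ⟨a', b', c', d', h', htr, h1, h2, h3, h4, hconj⟩ :=
    exists_isConj_nonneg _ a b c d h hA rfl
  obtain ⟨x, y, l, hx, hy, hl, he⟩ := nonneg_factor _ a' b' c' d' h' h1 h2 h3 h4 rfl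
  suffices hs : ∃ l', l' ≠ [] ∧ AllPos l' ∧ IsConj (mk a' b' c' d' h') (blockProd l') by
    obtain ⟨l', hne, hp, hc⟩ := hs
    exact ⟨l', hne, hp, hconj.trans hc⟩
  have htrace : Matrix.trace (mk a' b' c' d' h' : Matrix (Fin 2) (Fin 2) ℤ) = a' + d' :=
    trace_mk ..
  rw [he] at htrace ⊢
  rcases hx.eq_or_lt with rfl | hx
  · rw [elemFactor_zero, one_mul] at htrace ⊢
    rcases l with _ | ⟨p, l⟩
    · rw [blockProd_nil, one_mul, elemFactor_eq_mk, trace_mk] at htrace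
      linarith
    · have hp := hl p (by simp)
      refine ⟨(p.1, y + p.2) :: l, by simp,
        AllPos.cons hp.1 (by linarith [hp.2]) fun q hq => hl q (by simp [hq]), ?_⟩
      apply isConj_of_mul_eq (P := elemFactor 0 y)
      simp only [blockProd_cons, ← lower_mul_elemFactor, mul_assoc]
  · rcases hy.eq_or_lt with rfl | hy
    · rw [elemFactor_zero, mul_one] at htrace ⊢
      rcases List.eq_nil_or_concat l with rfl | ⟨l, p, rfl⟩
      · rw [blockProd_nil, mul_one, elemFactor_eq_mk, trace_mk] at htrace
        linarith
      · have hp := hl p (by simp)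
        refine ⟨l ++ [(p.1 + x, p.2)], by simp, ?_, ?_⟩
        · intro q hq
          rcases List.mem_append.1 hq with hq | hq
          · exact hl q (by simp [hq])
          · obtain rfl := List.mem_singleton.1 hq
            exact ⟨by linarith [hp.1], hp.2⟩
        · apply IsConj.symm
          apply isConj_of_mul_eq (P := elemFactor x 0)
          simp only [List.concat_eq_append, blockProd_concat, ← elemFactor_mul_upper, mul_assoc]
    · refine ⟨(x, y) :: l, by simp, AllPos.cons hx hy hl, ?_⟩
      apply isConj_of_mul_eq (P := elemFactor 0 y)
      rw [blockProd_cons, ← lower_mul_upper x y]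
      simp only [mul_assoc]

lemma Rmat_zpow (x : ℤ) : Rmat ^ x = elemFactor x 0 := by
  have h (u v : ℤ) : elemFactor (u + v) 0 = elemFactor u 0 * elemFactor v 0 :=
    (elemFactor_mul_upper u 0 v).symm
  induction x using Int.induction_on with
  | zero => rw [zpow_zero, elemFactor_zero]
  | succ n ih => rw [zpow_add_one, ih, h]; rfl
  | pred n ih =>
    rw [zpow_sub_one, ih, mul_inv_eq_iff_eq_mul, Rmat, ← h, sub_add_cancel]

lemma Lmat_zpow (y : ℤ) : Lmat ^ y = elemFactor 0 y := by
  have h (u v : ℤ) : elemFactor 0 (u + v) = elemFactor 0 u * elemFactor 0 v :=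
    (lower_mul_elemFactor 0 v u).symm
  induction y using Int.induction_on with
  | zero => rw [zpow_zero, elemFactor_zero]
  | succ n ih => rw [zpow_add_one, ih, h]; rfl
  | pred n ih =>
    rw [zpow_sub_one, ih, mul_inv_eq_iff_eq_mul, Lmat, ← h, sub_add_cancel]

/-- Every `A ∈ SL(2, ℤ)` with `tr A > 2` is conjugate in `SL(2, ℤ)` to a product
`[[1, m₂ₙ₋₁], [m₂ₙ, 1 + m₂ₙ₋₁ m₂ₙ]] ⋯ [[1, m₁], [m₂, 1 + m₁ m₂]]` with `n ≥ 1` and all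
`mᵢ` positive; equivalently to `L^{m₂ₙ} R^{m₂ₙ₋₁} ⋯ L^{m₂} R^{m₁}`.
(Here `a k = m_{2k-1}` and `b k = m_{2k}` for the `k`-th factor.) -/
theorem statement_19 (A : SL2Z)
    (hA : 2 < Matrix.trace (A : Matrix (Fin 2) (Fin 2) ℤ)) :
    ∃ (n : ℕ), 1 ≤ n ∧ ∃ a b : Fin n → ℤ,
      (∀ k, 0 < a k) ∧ (∀ k, 0 < b k) ∧
      (∃ P : SL2Z,
        A = P * (List.ofFn fun k => elemFactor (a k) (b k)).prod * P⁻¹) ∧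
      (List.ofFn fun k => elemFactor (a k) (b k)).prod =
        (List.ofFn fun k => Lmat ^ (b k) * Rmat ^ (a k)).prod := by
  obtain ⟨l, hne, hl, hconj⟩ := exists_isConj_blockProd hA
  have hprod : (List.ofFn fun k : Fin l.length => elemFactor (l.get k).1 (l.get k).2).prod
      = blockProd l := by
    rw [blockProd]
    congr 1
    conv_rhs => rw [← List.ofFn_get l, List.map_ofFn]
    rfl
  refine ⟨l.length, List.length_pos_iff.2 hne, fun k => (l.get k).1, fun k => (l.get k).2,
    fun k => (hl _ (l.get_mem k)).1, fun k => (hl _ (l.get_mem k)).2, ?_, ?_⟩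
  · obtain ⟨P, hP⟩ := isConj_iff.1 hconj.symm
    exact ⟨P, by rw [hprod, hP]⟩
  · simp only [Lmat_zpow, Rmat_zpow, lower_mul_upper]

end SL2Conj
end
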